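/- Let X be a Cantor space and K a nonempty set of Borel probability measures on X. Then there exists a minimal homeomorphism g of X whose set of g-invariant Borel probability measures is exactly K if and only if K is a dynamical simplex. -/

import Mathlib

open MeasureTheory

namespace DynSimplex

variable {X : Type*} [TopologicalSpace X] [MeasurableSpace X] [OpensMeasurableSpace X]

/-- `g` preserves the probability measure `μ`, i.e. `g_*μ = μ`. -/
def Preserves (g : X ≃ₜ X) (μ : ProbabilityMeasure X) : Prop :=
  (μ : Measure X).map g = (μ : Measure X)

/-- A homeomorphism is minimal if all of its (two-sided) orbits are dense. -/
def IsMinimal (g : X ≃ₜ X) : Prop :=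
  ∀ x : X, Dense (Set.range fun n : ℤ => (g.toEquiv ^ n) x)

/-- A set of probability measures is good if for all clopen `A`, `B` with `μ A < μ B` for
all `μ ∈ K`, there is a clopen `C ⊆ B` with `μ C = μ A` for all `μ ∈ K`. -/
def Good (K : Set (ProbabilityMeasure X)) : Prop :=
  ∀ A B : Set X, IsClopen A → IsClopen B → (∀ μ ∈ K, μ A < μ B) →
    ∃ C : Set X, IsClopen C ∧ C ⊆ B ∧ ∀ μ ∈ K, μ C = μ A

/-- Approximate divisibility of a set of probability measures. -/
def ApproximatelyDivisible (K : Set (ProbabilityMeasure X)) : Prop :=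
  ∀ A : Set X, IsClopen A → ∀ n : ℕ, 1 ≤ n → ∀ ε : ℝ, 0 < ε →
    ∃ B : Set X, IsClopen B ∧ B ⊆ A ∧
      ∀ μ ∈ K, (μ A : ℝ) - ε ≤ (n : ℝ) * (μ B : ℝ) ∧ (n : ℝ) * (μ B : ℝ) ≤ (μ A : ℝ)

/-- A probability measure has full support if every nonempty open set has positive measure. -/
def FullSupport (μ : ProbabilityMeasure X) : Prop :=
  ∀ U : Set X, IsOpen U → U.Nonempty → 0 < μ U

/-- A probability measure is atomless if all singletons are null. -/
def Atomless (μ : ProbabilityMeasure X) : Prop :=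
  ∀ x : X, μ {x} = 0

/-- Convexity of a set of probability measures (as a subset of the `ℝ≥0`-module of
finite measures). -/
def ProbConvex (K : Set (ProbabilityMeasure X)) : Prop :=
  Convex NNReal (ProbabilityMeasure.toFiniteMeasure '' K)

/-- The set of extreme points of a set of probability measures. -/
def ProbExtremePoints (K : Set (ProbabilityMeasure X)) : Set (ProbabilityMeasure X) :=
  ProbabilityMeasure.toFiniteMeasure ⁻¹'
    (Set.extremePoints NNReal (ProbabilityMeasure.toFiniteMeasure '' K))

/-- A dynamical simplex: a nonempty compact convex set of atomless, fully supported
probability measures which is good and approximately divisible. -/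
def DynamicalSimplex (K : Set (ProbabilityMeasure X)) : Prop :=
  K.Nonempty ∧ IsCompact K ∧ ProbConvex K ∧
    (∀ μ ∈ K, Atomless μ ∧ FullSupport μ) ∧ Good K ∧ ApproximatelyDivisible K

/-- Membership in the full group of `g`. -/
def InFullGroup (g h : X ≃ₜ X) : Prop :=
  ∀ x : X, ∃ n : ℤ, h x = (g.toEquiv ^ n) x

/-- Membership in the topological full group of `g`: `h` is given piecewise by powers of `g`
on a finite clopen partition of `X`. -/
def InTopologicalFullGroup (g h : X ≃ₜ X) : Prop :=
  ∃ (k : ℕ) (A : Fin k → Set X) (n : Fin k → ℤ),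
    (∀ i, IsClopen (A i)) ∧ (∀ x : X, ∃! i, x ∈ A i) ∧
    ∀ i, ∀ x ∈ A i, h x = (g.toEquiv ^ (n i)) x

/-- `g` preserves every measure in `K` (i.e. `g` belongs to the group `G`). -/
def PreservesAll (K : Set (ProbabilityMeasure X)) (g : X ≃ₜ X) : Prop :=
  ∀ μ ∈ K, Preserves g μ

/-- `g` is `K`-saturated: any two `K`-equivalent clopen sets are mapped one to the other by
an element of the topological full group of `g`. -/
def KSaturated (K : Set (ProbabilityMeasure X)) (g : X ≃ₜ X) : Prop :=
  ∀ U V : Set X, IsClopen U → IsClopen V → (∀ μ ∈ K, μ U = μ V) →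
    ∃ h : X ≃ₜ X, InTopologicalFullGroup g h ∧ h '' U = V

/-- The topology of uniform convergence on the homeomorphism group of a compact space
(the compact-open topology, induced from `C(X, X)`). -/
instance : TopologicalSpace (X ≃ₜ X) :=
  TopologicalSpace.induced (fun h : X ≃ₜ X => (h : C(X, X))) inferInstance

/-- A KR-partition for `K`: a finite family of columns, each column being a finite sequence of
clopen sets which are all `K`-equivalent, the atoms of all columns forming a partition of `X`. -/
structure KRPartition (X : Type*) [TopologicalSpace X] [MeasurableSpace X]
    (K : Set (ProbabilityMeasure X)) where
  numCols : ℕ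
  height : Fin numCols → ℕ
  atom : (i : Fin numCols) → Fin (height i + 1) → Set X
  clopen : ∀ i j, IsClopen (atom i j)
  equivK : ∀ i j j', ∀ μ ∈ K, μ (atom i j) = μ (atom i j')
  partition : ∀ x : X, ∃! p : (i : Fin numCols) × Fin (height i + 1), x ∈ atom p.1 p.2

/-- The base of a KR-partition: the union of the first atoms of the columns. -/
def KRPartition.base {K : Set (ProbabilityMeasure X)} (T : KRPartition X K) : Set X :=
  ⋃ i, T.atom i 0

/-- The top of a KR-partition: the union of the last atoms of the columns. -/
def KRPartition.top {K : Set (ProbabilityMeasure X)} (T : KRPartition X K) : Set X :=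
  ⋃ i, T.atom i (Fin.last _)

/-- `S` refines `T`: the base (resp. top) of `S` is contained in the base (resp. top) of `T`,
and every column of `S` is obtained by cutting and stacking columns of `T`. -/
def KRPartition.Refines {K : Set (ProbabilityMeasure X)} (S T : KRPartition X K) : Prop :=
  S.base ⊆ T.base ∧ S.top ⊆ T.top ∧
  ∀ c : Fin S.numCols, ∃ (m : ℕ) (idx : Fin (m + 1) → Fin T.numCols)
    (piece : (k : Fin (m + 1)) → Fin (T.height (idx k) + 1) → Set X),
    (∀ k j, piece k j ⊆ T.atom (idx k) j) ∧
    (S.height c + 1 = ∑ k : Fin (m + 1), (T.height (idx k) + 1)) ∧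
    ∀ (k : Fin (m + 1)) (j : Fin (T.height (idx k) + 1))
      (hlt : (∑ l ∈ Finset.Iio k, (T.height (idx l) + 1)) + (j : ℕ) < S.height c + 1),
      S.atom c ⟨(∑ l ∈ Finset.Iio k, (T.height (idx l) + 1)) + (j : ℕ), hlt⟩ = piece k j

/-- A KR-partition is compatible with a clopen set `U` if `U` is a union of its atoms,
equivalently every atom is either contained in `U` or disjoint from it. -/
def KRPartition.Compatible {K : Set (ProbabilityMeasure X)} (S : KRPartition X K)
    (U : Set X) : Prop :=
  ∀ i j, S.atom i j ⊆ U ∨ Disjoint (S.atom i j) U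

end DynSimplex

/-!
Below, `LC` means integer-valued and locally constant; a transfer for `g` and an LC function `F` is
an LC function `h` with `0 ≤ F + h ∘ g - h`.

**From a minimal homeomorphism to a dynamical simplex.** Let `μ A < μ B` for every invariant `μ`.
By compactness of the space of measures, the Birkhoff sums of `1_B - 1_A` over some window of
length `N` are positive everywhere. Hence the greedy matching which, at stage `n`, matches the
unmatched points `x ∈ A` with the unmatched points `g^n x ∈ B` exhausts `A` after `N` stages, and
the matched part of `B` has the measures of `A`. For approximate divisibility, visits to `A` are
counted modulo `n` until the first visit to a set `D` of very small measure; this cuts `A` into `n`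
clopen classes of almost equal measure, and goodness serves to trim one of them slightly.

**From a dynamical simplex `K` to a minimal homeomorphism.** A back-and-forth argument shows that
two LC labellings whose fibres have the same `K`-measures are conjugate by a homeomorphism
preserving all of `K`. Given an LC function `F` living on a clopen set `B`, with positive integral
for every `μ ∈ K`, one then finds a `K`-preserving homeomorphism supported in `B` which has a
transfer for `F`. Almost all of `B` is divided into cycles of a large length `κ` along which `F` is
constant. In cycles where `F < 0` the debt is concentrated in few points owing `κ` each; in cycles
where `F > 0` the wealth is concentrated in few points owning `κ` each. As the integrals are
positive, the wealthy set is larger than the debt set, so by goodness each debt can be paid by a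
wealthy point. Each of these operations is an instance of passing to an induced map.

Through induced maps again, a given homeomorphism can be modified inside a clopen set `B` met by all
orbits so that it acquires a transfer for a given LC function with positive integrals. Running
through the countably many such functions, with sets `B` shrinking fast enough, gives a limit
homeomorphism `g` preserving `K` with a transfer for *every* LC function whose integrals are
positive on `K`. For `M • 1_U - 1` with `M` large this means that every orbit meets `U`, hence
minimality. By Hahn–Banach and rounding, an invariant measure outside `K` would have a negative
integral against an LC function whose integrals are positive on `K`, contradicting the existence of
a transfer.
-/

namespace DynSimplex

open Filter Topology

/-! ### Locally constant functions, clopen sets and measures -/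

lemma exists_seq {α : Type*} {r : ℕ → α → α → Prop} (h : ∀ n a, ∃ b, r n a b) (a : α) :
    ∃ s : ℕ → α, s 0 = a ∧ ∀ n, r n (s n) (s (n + 1)) := by
  choose next hnext using h
  exact ⟨fun n ↦ Nat.rec a next n, rfl, fun n ↦ hnext n _⟩

section LocallyConstant

variable {X ι Y : Type*} [TopologicalSpace X]

lemma isClopen_preimage {f : X → ι} (hf : IsLocallyConstant f) (s : Set ι) : IsClopen (f ⁻¹' s) :=
  ⟨⟨hf sᶜ⟩, hf s⟩

lemma isLocallyConstant_mem {A : Set X} (hA : IsClopen A) : IsLocallyConstant (· ∈ A) := by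
  classical
  refine (IsLocallyConstant.iff_eventually_eq _).2 fun x ↦ ?_
  by_cases hx : x ∈ A
  · filter_upwards [hA.isOpen.mem_nhds hx] with y hy using by simp [hx, hy]
  · filter_upwards [hA.compl.isOpen.mem_nhds hx] with y hy
    simp only [hx, show y ∉ A from hy]

lemma isLocallyConstant_piecewise {A : Set X} [DecidablePred (· ∈ A)] (hA : IsClopen A)
    {f g : X → Y} (hf : IsLocallyConstant f) (hg : IsLocallyConstant g) :
    IsLocallyConstant (A.piecewise f g) := by
  refine (IsLocallyConstant.iff_eventually_eq _).2 fun x ↦ ?_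
  filter_upwards [(isLocallyConstant_mem hA).eventually_eq x, hf.eventually_eq x,
    hg.eventually_eq x] with y hy hfy hgy
  simp only [Set.piecewise, hy, hfy, hgy]

lemma isLocallyConstant_indicator {M : Type*} [Zero M] {A : Set X} (hA : IsClopen A) {f : X → M}
    (hf : IsLocallyConstant f) : IsLocallyConstant (A.indicator f) := by
  classical
  rw [← Set.piecewise_eq_indicator]
  exact isLocallyConstant_piecewise hA hf (.const 0)

lemma isLocallyConstant_dep {c : X → ι} (hc : IsLocallyConstant c) {f : ι → X → Y}
    (hf : ∀ i, IsLocallyConstant (f i)) : IsLocallyConstant fun x ↦ f (c x) x := by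
  refine (IsLocallyConstant.iff_eventually_eq _).2 fun x ↦ ?_
  filter_upwards [hc.eventually_eq x, (hf (c x)).eventually_eq x] with y h₁ h₂
  rw [h₁, h₂]

lemma continuous_dep [TopologicalSpace Y] {c : X → ι} (hc : IsLocallyConstant c) {f : ι → X → Y}
    (hf : ∀ i, Continuous (f i)) : Continuous fun x ↦ f (c x) x := by
  refine continuous_iff_continuousAt.2 fun x ↦ (hf (c x)).continuousAt.congr ?_
  filter_upwards [hc.eventually_eq x] with y hy
  rw [hy]

lemma isClopen_dep {c : X → ι} (hc : IsLocallyConstant c) {A : ι → Set X}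
    (hA : ∀ i, IsClopen (A i)) : IsClopen {x | x ∈ A (c x)} := by
  simpa using isClopen_preimage
    (isLocallyConstant_dep hc fun i ↦ isLocallyConstant_mem (hA i)) {True}

lemma isLocallyConstant_sum {M : Type*} [AddCommMonoid M] {f : ι → X → M}
    (hf : ∀ i, IsLocallyConstant (f i)) (s : Finset ι) :
    IsLocallyConstant fun x ↦ ∑ i ∈ s, f i x := by
  classical
  induction s using Finset.induction_on with
  | empty => exact IsLocallyConstant.const (0 : M)
  | insert i s hi ih => simpa only [Finset.sum_insert hi] using (hf i).comp₂ ih (· + ·)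

lemma isLocallyConstant_birkhoffSum {M : Type*} [AddCommMonoid M] {g : X → X} (hg : Continuous g)
    {f : X → M} (hf : IsLocallyConstant f) (n : ℕ) : IsLocallyConstant (birkhoffSum g f n) :=
  isLocallyConstant_sum (fun k ↦ hf.comp_continuous (hg.iterate k)) _

lemma isLocallyConstant_add {M : Type*} [Add M] {f g : X → M} (hf : IsLocallyConstant f)
    (hg : IsLocallyConstant g) : IsLocallyConstant (f + g) :=
  hf.comp₂ hg (· + ·)

lemma isLocallyConstant_sub {M : Type*} [Sub M] {f g : X → M} (hf : IsLocallyConstant f)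
    (hg : IsLocallyConstant g) : IsLocallyConstant (f - g) :=
  hf.comp₂ hg (· - ·)

lemma exists_abs_le [CompactSpace X] {f : X → ℤ} (hf : IsLocallyConstant f) :
    ∃ M : ℕ, ∀ x, |f x| ≤ M := by
  obtain ⟨M, hM⟩ := (hf.comp fun n ↦ n.natAbs).range_finite.bddAbove
  exact ⟨M, fun x ↦ by rw [Int.abs_eq_natAbs]; exact Int.ofNat_le.2 (hM ⟨x, rfl⟩)⟩

end LocallyConstant

section Measure

variable {X : Type*} [MeasurableSpace X] (μ : ProbabilityMeasure X) {A B : Set X}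

lemma coe_union (h : Disjoint A B) (hB : MeasurableSet B) : (μ (A ∪ B) : ℝ) = μ A + μ B := by
  simpa using measureReal_union (μ := (μ : Measure X)) h hB

lemma coe_sdiff (h : B ⊆ A) (hB : MeasurableSet B) : (μ (A \ B) : ℝ) = μ A - μ B := by
  simpa using measureReal_sdiff (μ := (μ : Measure X)) h hB

lemma coe_inter_add_sdiff (A : Set X) (hB : MeasurableSet B) :
    (μ (A ∩ B) : ℝ) + μ (A \ B) = μ A := by
  simpa using measureReal_inter_add_sdiff (μ := (μ : Measure X)) (s := A) hB

lemma coe_mono (h : A ⊆ B) : (μ A : ℝ) ≤ μ B := by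
  exact_mod_cast μ.apply_mono h

end Measure

section Preserves

variable {X : Type*} [TopologicalSpace X] [MeasurableSpace X] {g h : X ≃ₜ X}
  {μ : ProbabilityMeasure X} {K : Set (ProbabilityMeasure X)}

lemma PreservesAll.refl : PreservesAll K (Homeomorph.refl X) := fun μ _ ↦ by
  simp [Preserves]

variable [BorelSpace X]

lemma preserves_iff : Preserves g μ ↔ MeasurePreserving g (μ : Measure X) (μ : Measure X) :=
  ⟨fun h ↦ ⟨g.continuous.measurable, h⟩, fun h ↦ h.map_eq⟩

lemma PreservesAll.trans (hg : PreservesAll K g) (hh : PreservesAll K h) :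
    PreservesAll K (g.trans h) := fun μ hμ ↦
  preserves_iff.2 ((preserves_iff.1 (hh μ hμ)).comp (preserves_iff.1 (hg μ hμ)))

lemma PreservesAll.symm (hg : PreservesAll K g) : PreservesAll K g.symm := fun μ hμ ↦
  preserves_iff.2 (MeasurePreserving.symm (e := g.toMeasurableEquiv) (preserves_iff.1 (hg μ hμ)))

lemma Preserves.measure_preimage (hg : Preserves g μ) {A : Set X} (hA : MeasurableSet A) :
    μ (g ⁻¹' A) = μ A := by
  simp only [ProbabilityMeasure.coeFn_def,
    (preserves_iff.1 hg).measure_preimage hA.nullMeasurableSet]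

lemma Preserves.measure_preimage_iterate (hg : Preserves g μ) {A : Set X} (hA : MeasurableSet A)
    (n : ℕ) : μ (g^[n] ⁻¹' A) = μ A := by
  simp only [ProbabilityMeasure.coeFn_def,
    ((preserves_iff.1 hg).iterate n).measure_preimage hA.nullMeasurableSet]

end Preserves

/-- The integral of an integer-valued function. -/
noncomputable def intIntegral {X : Type*} [MeasurableSpace X] (μ : ProbabilityMeasure X)
    (f : X → ℤ) : ℝ :=
  ∫ x, (f x : ℝ) ∂(μ : Measure X)

lemma intIntegral_indicator_const {X : Type*} [MeasurableSpace X] (μ : ProbabilityMeasure X)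
    {A : Set X} (hA : MeasurableSet A) (c : ℤ) :
    intIntegral μ (A.indicator fun _ ↦ c) = c * μ A := by
  have : (fun x ↦ ((A.indicator (fun _ ↦ c) x : ℤ) : ℝ)) = A.indicator fun _ ↦ (c : ℝ) := by
    ext x; by_cases hx : x ∈ A <;> simp [hx]
  rw [intIntegral, this, integral_indicator_const _ hA, smul_eq_mul, mul_comm]
  rfl

lemma intIntegral_indicator_one {X : Type*} [MeasurableSpace X] (μ : ProbabilityMeasure X)
    {A : Set X} (hA : MeasurableSet A) : intIntegral μ (A.indicator 1) = μ A :=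
  (intIntegral_indicator_const μ hA 1).trans (by simp)

section IntIntegral

variable {X : Type*} [TopologicalSpace X] [MeasurableSpace X] [BorelSpace X]
  {μ : ProbabilityMeasure X} {f f' : X → ℤ}

lemma Preserves.intIntegral_comp {g : X ≃ₜ X} (hg : Preserves g μ) (f : X → ℤ) :
    intIntegral μ (f ∘ g) = intIntegral μ f :=
  (preserves_iff.1 hg).integral_comp g.measurableEmbedding fun x ↦ (f x : ℝ)

lemma Preserves.intIntegral_comp_iterate {g : X ≃ₜ X} (hg : Preserves g μ) (f : X → ℤ) (n : ℕ) :
    intIntegral μ (f ∘ g^[n]) = intIntegral μ f := by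
  induction n with
  | zero => rfl
  | succ n ih => rw [Function.iterate_succ, ← Function.comp_assoc, hg.intIntegral_comp, ih]

variable [CompactSpace X]

lemma integrable_of_isLocallyConstant {E : Type*} [NormedAddCommGroup E] {φ : X → E}
    (hφ : IsLocallyConstant φ) : Integrable φ (μ : Measure X) :=
  hφ.continuous.integrable_of_hasCompactSupport (HasCompactSupport.of_compactSpace _)

lemma integrable_intCast (hf : IsLocallyConstant f) :
    Integrable (fun x ↦ (f x : ℝ)) (μ : Measure X) :=
  integrable_of_isLocallyConstant (hf.comp ((↑) : ℤ → ℝ))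

lemma intIntegral_add (hf : IsLocallyConstant f) (hf' : IsLocallyConstant f') :
    intIntegral μ (f + f') = intIntegral μ f + intIntegral μ f' := by
  simpa [intIntegral] using integral_add (integrable_intCast hf) (integrable_intCast hf')

lemma intIntegral_sub (hf : IsLocallyConstant f) (hf' : IsLocallyConstant f') :
    intIntegral μ (f - f') = intIntegral μ f - intIntegral μ f' := by
  simpa [intIntegral] using integral_sub (integrable_intCast hf) (integrable_intCast hf')

lemma intIntegral_mono (hf : IsLocallyConstant f) (hf' : IsLocallyConstant f') (h : f ≤ f') :
    intIntegral μ f ≤ intIntegral μ f' :=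
  integral_mono (integrable_intCast hf) (integrable_intCast hf') fun x ↦ Int.cast_le.2 (h x)

lemma continuous_intIntegral (hf : IsLocallyConstant f) : Continuous (intIntegral · f) :=
  ProbabilityMeasure.continuous_integral_continuousMap
    (⟨_, (hf.comp ((↑) : ℤ → ℝ)).continuous⟩ : C(X, ℝ))

end IntIntegral

section Cantor

variable {X : Type*} [TopologicalSpace X] [CompactSpace X] [TopologicalSpace.MetrizableSpace X]
  [TotallyDisconnectedSpace X]

instance : Countable (TopologicalSpace.Clopens X) := by
  let := TopologicalSpace.metrizableSpaceMetric X
  rw [TopologicalSpace.Clopens.countable_iff_secondCountable]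
  infer_instance

variable [MeasurableSpace X] [BorelSpace X]

lemma measure_ext_of_isClopen {μ ν : Measure X} [IsFiniteMeasure μ]
    (h : ∀ A : Set X, IsClopen A → μ A = ν A) : μ = ν := by
  let := TopologicalSpace.metrizableSpaceMetric X
  have hgen : ‹MeasurableSpace X› = MeasurableSpace.generateFrom {A : Set X | IsClopen A} := by
    rw [BorelSpace.measurable_eq (α := X)]
    exact isTopologicalBasis_isClopen.borel_eq_generateFrom
  exact ext_of_generate_finite _ hgen (fun A hA B hB _ ↦ IsClopen.inter hA hB) h
    (h _ isClopen_univ)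

lemma preserves_of_forall_isClopen {g : X ≃ₜ X} {μ : ProbabilityMeasure X}
    (h : ∀ A : Set X, IsClopen A → μ (g ⁻¹' A) = μ A) : Preserves g μ := by
  have := Measure.isProbabilityMeasure_map (μ := (μ : Measure X)) g.continuous.aemeasurable
  refine measure_ext_of_isClopen fun A hA ↦ ?_
  rw [Measure.map_apply g.continuous.measurable hA.isOpen.measurableSet,
    ← ProbabilityMeasure.ennreal_coeFn_eq_coeFn_toMeasure,
    ← ProbabilityMeasure.ennreal_coeFn_eq_coeFn_toMeasure, h A hA]

end Cantor

section Compact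

variable {X : Type*} [TopologicalSpace X] [MeasurableSpace X] [OpensMeasurableSpace X]
  {K : Set (ProbabilityMeasure X)}

lemma exists_pos_forall_le (hK : IsCompact K) {φ : ProbabilityMeasure X → ℝ} (hφ : Continuous φ)
    (h : ∀ μ ∈ K, 0 < φ μ) : ∃ δ > 0, ∀ μ ∈ K, δ ≤ φ μ := by
  rcases K.eq_empty_or_nonempty with rfl | hne
  · exact ⟨1, one_pos, by simp⟩
  · obtain ⟨μ, hμ, hmin⟩ := hK.exists_isMinOn hne hφ.continuousOn
    exact ⟨φ μ, h μ hμ, fun ν hν ↦ hmin hν⟩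

variable [HasOuterApproxClosed X]

lemma continuous_apply_isClopen {A : Set X} (hA : IsClopen A) :
    Continuous fun μ : ProbabilityMeasure X ↦ (μ A : ℝ) :=
  NNReal.continuous_coe.comp <| continuous_iff_continuousAt.2 fun _ ↦
    ProbabilityMeasure.tendsto_measure_of_isClopen_of_tendsto tendsto_id hA

end Compact

section SmallClopen

variable {X : Type*} [TopologicalSpace X] [CompactSpace X] [TopologicalSpace.MetrizableSpace X]
  [TotallyDisconnectedSpace X] [MeasurableSpace X] [BorelSpace X]
  {K : Set (ProbabilityMeasure X)}

lemma exists_isClopen_lt {μ : ProbabilityMeasure X} (hμ : Atomless μ) {x : X} {U : Set X}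
    (hU : IsOpen U) (hxU : x ∈ U) {ε : ℝ} (hε : 0 < ε) :
    ∃ A : Set X, IsClopen A ∧ x ∈ A ∧ A ⊆ U ∧ (μ A : ℝ) < ε := by
  let := TopologicalSpace.metrizableSpaceMetric X
  have h0 : (μ : Measure X) {x} = 0 := (μ.null_iff_toMeasure_null _).1 (hμ x)
  obtain ⟨V, hxV, hVo, hV⟩ := Set.exists_isOpen_lt_of_lt {x} (ENNReal.ofReal ε)
    (μ := (μ : Measure X)) (by simpa [h0] using hε)
  obtain ⟨A, hA, hxA, hAUV⟩ := compact_exists_isClopen_in_isOpen (hU.inter hVo) ⟨hxU, hxV rfl⟩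
  exact ⟨A, hA, hxA, fun y hy ↦ (hAUV hy).1, ENNReal.toReal_lt_of_lt_ofReal
    ((measure_mono fun y hy ↦ (hAUV hy).2).trans_lt hV)⟩

lemma exists_isClopen_forall_lt (hK : IsCompact K) (hat : ∀ μ ∈ K, Atomless μ) {x : X} {U : Set X}
    (hU : IsOpen U) (hxU : x ∈ U) {ε : ℝ} (hε : 0 < ε) :
    ∃ A : Set X, IsClopen A ∧ x ∈ A ∧ A ⊆ U ∧ ∀ μ ∈ K, (μ A : ℝ) < ε := by
  refine hK.induction_on (p := fun S ↦ ∃ A : Set X, IsClopen A ∧ x ∈ A ∧ A ⊆ U ∧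
    ∀ μ ∈ S, (μ A : ℝ) < ε) ?_ ?_ ?_ ?_
  · obtain ⟨A, hA, hx, hAU⟩ := compact_exists_isClopen_in_isOpen hU hxU
    exact ⟨A, hA, hx, hAU, by simp⟩
  · rintro s t hst ⟨A, hA, hx, hAU, h⟩
    exact ⟨A, hA, hx, hAU, fun μ hμ ↦ h μ (hst hμ)⟩
  · rintro s t ⟨A, hA, hx, hAU, h⟩ ⟨B, hB, hx', -, h'⟩
    refine ⟨A ∩ B, hA.inter hB, ⟨hx, hx'⟩, fun y hy ↦ hAU hy.1, ?_⟩
    rintro μ (hμ | hμ)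
    exacts [(coe_mono μ Set.inter_subset_left).trans_lt (h μ hμ),
      (coe_mono μ Set.inter_subset_right).trans_lt (h' μ hμ)]
  · intro μ hμ
    let := TopologicalSpace.metrizableSpaceMetric X
    obtain ⟨A, hA, hx, hAU, h⟩ := exists_isClopen_lt (hat μ hμ) hU hxU hε
    exact ⟨{ν | (ν A : ℝ) < ε}, mem_nhdsWithin_of_mem_nhds <|
      (isOpen_lt (continuous_apply_isClopen hA) continuous_const).mem_nhds h,
      A, hA, hx, hAU, fun ν hν ↦ hν⟩

end SmallClopen

section Accessors

variable {X : Type*} [TopologicalSpace X] [MeasurableSpace X] [OpensMeasurableSpace X]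
  {K : Set (ProbabilityMeasure X)}

namespace DynamicalSimplex

variable (h : DynamicalSimplex K)
include h

lemma nonempty : K.Nonempty := h.1

lemma isCompact : IsCompact K := h.2.1

lemma probConvex : ProbConvex K := h.2.2.1

lemma atomless {μ : ProbabilityMeasure X} (hμ : μ ∈ K) : Atomless μ := (h.2.2.2.1 μ hμ).1

lemma fullSupport {μ : ProbabilityMeasure X} (hμ : μ ∈ K) : FullSupport μ := (h.2.2.2.1 μ hμ).2

lemma good : Good K := h.2.2.2.2.1

lemma approximatelyDivisible : ApproximatelyDivisible K := h.2.2.2.2.2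

lemma pos {μ : ProbabilityMeasure X} (hμ : μ ∈ K) {A : Set X} (hA : IsOpen A) (hne : A.Nonempty) :
    0 < (μ A : ℝ) :=
  NNReal.coe_pos.2 (h.fullSupport hμ A hA hne)

end DynamicalSimplex

end Accessors

/-! ### Homogeneity -/

section Supported

variable {X : Type*} [TopologicalSpace X] {g h : X ≃ₜ X} {A B : Set X}

/-- The homeomorphism `g` moves only points of `B`. -/
def SupportedIn (g : X ≃ₜ X) (B : Set X) : Prop :=
  ∀ x ∉ B, g x = x

lemma SupportedIn.mono (hg : SupportedIn g A) (hAB : A ⊆ B) : SupportedIn g B :=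
  fun x hx ↦ hg x fun hxA ↦ hx (hAB hxA)

lemma SupportedIn.trans (hg : SupportedIn g B) (hh : SupportedIn h B) :
    SupportedIn (g.trans h) B := fun x hx ↦ by
  rw [Homeomorph.trans_apply, hg x hx, hh x hx]

lemma SupportedIn.symm (hg : SupportedIn g B) : SupportedIn g.symm B := fun x hx ↦ by
  rw [Homeomorph.symm_apply_eq, hg x hx]

lemma SupportedIn.apply_mem_iff (hg : SupportedIn g B) {x : X} : g x ∈ B ↔ x ∈ B := by
  refine ⟨fun h ↦ by_contra fun hx ↦ hx (hg x hx ▸ h), fun hx ↦ by_contra fun h ↦ h ?_⟩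
  rwa [g.injective (hg _ h)]

end Supported

section Matched

variable {X ι κ : Type*} [MeasurableSpace X] {K : Set (ProbabilityMeasure X)}

/-- Two labellings of `X` are matched if every set of labels has preimages of equal measure under
all members of `K`. -/
def Matched (K : Set (ProbabilityMeasure X)) (P Q : X → ι) : Prop :=
  ∀ S : Set ι, ∀ μ ∈ K, μ (P ⁻¹' S) = μ (Q ⁻¹' S)

lemma Matched.symm {P Q : X → ι} (h : Matched K P Q) : Matched K Q P :=
  fun S μ hμ ↦ (h S μ hμ).symm

lemma Matched.comp {P Q : X → ι} (h : Matched K P Q) (f : ι → κ) : Matched K (f ∘ P) (f ∘ Q) :=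
  fun S μ hμ ↦ h (f ⁻¹' S) μ hμ

variable [TopologicalSpace X]

/-- A refining sequence of pairs of matched labellings in which both sides eventually determine
every clopen set: the outcome of a back-and-forth construction. -/
structure MatchedTower (K : Set (ProbabilityMeasure X)) (P Q : ℕ → X → ι) : Prop where
  left (n : ℕ) : IsLocallyConstant (P n)
  right (n : ℕ) : IsLocallyConstant (Q n)
  matched (n : ℕ) : Matched K (P n) (Q n)
  refines (n : ℕ) : ∃ r : ι → ι, P n = r ∘ P (n + 1) ∧ Q n = r ∘ Q (n + 1)
  determines (A : Set X) : IsClopen A → ∃ n, (∃ S, A = P n ⁻¹' S) ∧ ∃ S, A = Q n ⁻¹' S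

lemma MatchedTower.symm {P Q : ℕ → X → ι} (h : MatchedTower K P Q) : MatchedTower K Q P where
  left := h.right
  right := h.left
  matched n := (h.matched n).symm
  refines n := (h.refines n).imp fun _ hr ↦ hr.symm
  determines A hA := (h.determines A hA).imp fun _ hn ↦ hn.symm

variable [OpensMeasurableSpace X] [CompactSpace X]

lemma matched_of_fibers {P Q : X → ι} (hP : IsLocallyConstant P) (hQ : IsLocallyConstant Q)
    (h : ∀ i, ∀ μ ∈ K, μ (P ⁻¹' {i}) = μ (Q ⁻¹' {i})) : Matched K P Q := by
  classical
  intro S μ hμ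
  let T : Finset ι := {i ∈ hP.range_finite.toFinset ∪ hQ.range_finite.toFinset | i ∈ S}
  have hPT : P ⁻¹' S = P ⁻¹' T := by ext x; simp [T]
  have hQT : Q ⁻¹' S = Q ⁻¹' T := by ext x; simp [T]
  have hμT : (μ : Measure X) (P ⁻¹' T) = (μ : Measure X) (Q ⁻¹' T) := by
    rw [← sum_measure_preimage_singleton T fun i _ ↦ (hP {i}).measurableSet,
      ← sum_measure_preimage_singleton T fun i _ ↦ (hQ {i}).measurableSet]
    refine Finset.sum_congr rfl fun i _ ↦ ?_
    simpa only [ProbabilityMeasure.ennreal_coeFn_eq_coeFn_toMeasure] using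
      congrArg ((↑) : NNReal → ENNReal) (h i μ hμ)
  simp only [hPT, hQT, ProbabilityMeasure.coeFn_def, hμT]

end Matched

section BackAndForth

variable {X ι : Type*} [TopologicalSpace X] [MeasurableSpace X] [OpensMeasurableSpace X]
  {K : Set (ProbabilityMeasure X)} {P Q : X → ι} {A B C : Set X}

lemma DynamicalSimplex.exists_subset_measure_eq (hK : DynamicalSimplex K) (hA : IsClopen A)
    (hB : IsClopen B) (hC : IsClopen C) (hAB : ∀ μ ∈ K, μ A = μ B) (hCA : C ⊆ A) :
    ∃ D : Set X, IsClopen D ∧ D ⊆ B ∧ ∀ μ ∈ K, μ D = μ C := by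
  rcases hCA.eq_or_ssubset with rfl | hCA
  · exact ⟨B, hB, le_rfl, fun μ hμ ↦ (hAB μ hμ).symm⟩
  · refine hK.good C B hC hB fun μ hμ ↦ NNReal.coe_lt_coe.1 ?_
    have hpos := hK.pos hμ (hA.diff hC).isOpen (Set.nonempty_of_ssubset hCA)
    rw [coe_sdiff μ hCA.subset hC.isOpen.measurableSet, hAB μ hμ] at hpos
    linarith

variable [CompactSpace X]

lemma DynamicalSimplex.exists_matched_mem (hK : DynamicalSimplex K) (hP : IsLocallyConstant P)
    (hQ : IsLocallyConstant Q) (h : Matched K P Q) (hC : IsClopen C) :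
    ∃ D : Set X, IsClopen D ∧ Matched K (fun x ↦ (P x, x ∈ C)) fun x ↦ (Q x, x ∈ D) := by
  choose D hD hDQ hDμ using fun i ↦ hK.exists_subset_measure_eq (isClopen_preimage hP {i})
    (isClopen_preimage hQ {i}) ((isClopen_preimage hP {i}).inter hC) (h {i}) Set.inter_subset_left
  have hD' : IsClopen {x | x ∈ D (Q x)} := isClopen_dep hQ hD
  have hinter (i) : Q ⁻¹' {i} ∩ {x | x ∈ D (Q x)} = D i := by
    ext x
    refine ⟨?_, fun hx ↦ ⟨hDQ i hx, ?_⟩⟩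
    · rintro ⟨rfl, hx⟩
      exact hx
    · rwa [Set.mem_ofPred_eq, show Q x = i from hDQ i hx]
  refine ⟨_, hD', matched_of_fibers (hP.prodMk (isLocallyConstant_mem hC))
    (hQ.prodMk (isLocallyConstant_mem hD')) ?_⟩
  rintro ⟨i, p⟩ μ hμ
  by_cases hp : p
  · convert (hDμ i μ hμ).symm using 2
    · ext x; simp [hp]
    · rw [← hinter]; ext x; simp [hp]
  · suffices μ (P ⁻¹' {i} \ C) = μ (Q ⁻¹' {i} \ {x | x ∈ D (Q x)}) by
      convert this using 2 <;> ext x <;> simp [hp]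
    have hPC := coe_inter_add_sdiff μ (P ⁻¹' {i}) hC.isOpen.measurableSet
    have hQD := coe_inter_add_sdiff μ (Q ⁻¹' {i}) hD'.isOpen.measurableSet
    rw [hinter, hDμ i μ hμ, ← h {i} μ hμ, ← hPC] at hQD
    exact NNReal.coe_injective (add_left_cancel hQD).symm

/-- The new labels are stored in a list, so that all stages of the construction have labels in the
same type. -/
lemma DynamicalSimplex.exists_refinement (hK : DynamicalSimplex K) {P Q : X → ι × List Prop}
    (hP : IsLocallyConstant P) (hQ : IsLocallyConstant Q) (h : Matched K P Q) (hC : IsClopen C) :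
    ∃ P' Q' : X → ι × List Prop, IsLocallyConstant P' ∧ IsLocallyConstant Q' ∧ Matched K P' Q' ∧
      (∃ r, P = r ∘ P' ∧ Q = r ∘ Q') ∧ (∃ S, C = P' ⁻¹' S) ∧ ∃ S, C = Q' ⁻¹' S := by
  obtain ⟨D, hD, hPD⟩ := hK.exists_matched_mem hP hQ h hC
  have hPC := hP.prodMk (isLocallyConstant_mem hC)
  have hQD := hQ.prodMk (isLocallyConstant_mem hD)
  obtain ⟨E, hE, hQE⟩ := hK.exists_matched_mem hQD hPC hPD.symm hC
  let encode : ((ι × List Prop) × Prop) × Prop → ι × List Prop :=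
    fun t ↦ (t.1.1.1, t.2 :: t.1.2 :: t.1.1.2)
  refine ⟨_, _, (hPC.prodMk (isLocallyConstant_mem hE)).comp encode,
    (hQD.prodMk (isLocallyConstant_mem hC)).comp encode, hQE.symm.comp encode,
    ⟨fun t ↦ (t.1, t.2.drop 2), rfl, rfl⟩,
    ⟨{t | t.2[1]? = some True}, ?_⟩, ⟨{t | t.2[0]? = some True}, ?_⟩⟩ <;>
  ext x <;> simp [encode]

end BackAndForth

section Homogeneity

variable {X : Type*} [TopologicalSpace X] [CompactSpace X] [MeasurableSpace X]
  {ι : Type*} {K : Set (ProbabilityMeasure X)}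

/-- Matched fibres are nonempty together because the measures have full support. -/
lemma MatchedTower.range_subset [OpensMeasurableSpace X] (hK : DynamicalSimplex K)
    {P Q : ℕ → X → ι} (h : MatchedTower K P Q) :
    Set.range (fun x n ↦ P n x) ⊆ Set.range (fun x n ↦ Q n x) := by
  rintro _ ⟨x, rfl⟩
  have hclosed (n) : IsClosed (Q n ⁻¹' {P n x}) := (isClopen_preimage (h.right n) _).isClosed
  have hanti (n) : Q (n + 1) ⁻¹' {P (n + 1) x} ⊆ Q n ⁻¹' {P n x} := by
    intro y hy
    obtain ⟨r, hPr, hQr⟩ := h.refines n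
    simp only [Set.mem_preimage, Set.mem_singleton_iff, hPr, hQr, Function.comp_apply] at hy ⊢
    rw [hy]
  have hne (n) : (Q n ⁻¹' {P n x}).Nonempty := by
    obtain ⟨μ, hμ⟩ := hK.nonempty
    have hpos := hK.pos hμ (isClopen_preimage (h.left n) {P n x}).isOpen ⟨x, rfl⟩
    rw [h.matched n _ μ hμ] at hpos
    exact Set.nonempty_iff_ne_empty.2 fun hempty ↦ by simp [hempty] at hpos
  obtain ⟨y, hy⟩ := IsCompact.nonempty_iInter_of_sequence_nonempty_isCompact_isClosed _ hanti hne
    (hclosed 0).isCompact hclosed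
  exact ⟨y, funext fun n ↦ Set.mem_iInter.1 hy n⟩

variable [TopologicalSpace.MetrizableSpace X] [TotallyDisconnectedSpace X]

lemma MatchedTower.isEmbedding [TopologicalSpace ι] [DiscreteTopology ι] {P Q : ℕ → X → ι}
    (h : MatchedTower K P Q) : IsEmbedding fun x n ↦ P n x := by
  refine (Continuous.isClosedEmbedding
    (continuous_pi fun n ↦ (h.left n).continuous) fun x y hxy ↦ ?_).isEmbedding
  by_contra hne
  obtain ⟨A, hA, hxA, hAy⟩ := compact_exists_isClopen_in_isOpen
    (isOpen_compl_singleton (x := y)) (Set.mem_compl_singleton_iff.2 hne)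
  obtain ⟨n, ⟨S, rfl⟩, -⟩ := h.determines A hA
  refine hAy (?_ : P n y ∈ S) rfl
  rwa [← congrFun hxy n]

variable [BorelSpace X]

lemma MatchedTower.exists_homeomorph (hK : DynamicalSimplex K) {P Q : ℕ → X → ι}
    (h : MatchedTower K P Q) : ∃ φ : X ≃ₜ X, PreservesAll K φ ∧ ∀ n x, Q n (φ x) = P n x := by
  let : TopologicalSpace ι := ⊥
  have : DiscreteTopology ι := ⟨rfl⟩
  have hrange := (h.range_subset hK).antisymm (h.symm.range_subset hK)
  let φ : X ≃ₜ X := (h.isEmbedding.toHomeomorph.trans (Homeomorph.setCongr hrange)).trans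
    h.symm.isEmbedding.toHomeomorph.symm
  have hφ (n x) : Q n (φ x) = P n x := by
    have : h.symm.isEmbedding.toHomeomorph (φ x) =
        Homeomorph.setCongr hrange (h.isEmbedding.toHomeomorph x) := by simp [φ]
    exact congrFun (congrArg Subtype.val this) n
  refine ⟨φ, fun μ hμ ↦ preserves_of_forall_isClopen fun A hA ↦ ?_, hφ⟩
  obtain ⟨n, -, S, rfl⟩ := h.determines A hA
  rw [← h.matched n S μ hμ]
  congr 1
  ext x
  simp [hφ]

lemma DynamicalSimplex.exists_matchedTower (hK : DynamicalSimplex K) {P Q : X → ι}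
    (hP : IsLocallyConstant P) (hQ : IsLocallyConstant Q) (h : Matched K P Q) :
    ∃ P' Q' : ℕ → X → ι × List Prop, MatchedTower K P' Q' ∧
      (∀ x, (P' 0 x).1 = P x) ∧ ∀ x, (Q' 0 x).1 = Q x := by
  obtain ⟨C, hC⟩ := exists_surjective_nat (TopologicalSpace.Clopens X)
  let Stage := {R : (X → ι × List Prop) × (X → ι × List Prop) //
    IsLocallyConstant R.1 ∧ IsLocallyConstant R.2 ∧ Matched K R.1 R.2}
  have hstep (n : ℕ) (s : Stage) : ∃ t : Stage,
      (∃ r, s.1.1 = r ∘ t.1.1 ∧ s.1.2 = r ∘ t.1.2) ∧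
      (∃ S, (C n : Set X) = t.1.1 ⁻¹' S) ∧ ∃ S, (C n : Set X) = t.1.2 ⁻¹' S := by
    obtain ⟨P', Q', hP', hQ', hm, hrefine⟩ :=
      hK.exists_refinement s.2.1 s.2.2.1 s.2.2.2 (C n).isClopen
    exact ⟨⟨(P', Q'), hP', hQ', hm⟩, hrefine⟩
  let embed : ι → ι × List Prop := fun i ↦ (i, [])
  obtain ⟨s, hs₀, hs⟩ := exists_seq hstep
    ⟨(embed ∘ P, embed ∘ Q), hP.comp embed, hQ.comp embed, h.comp embed⟩
  refine ⟨fun n ↦ (s n).1.1, fun n ↦ (s n).1.2, ⟨fun n ↦ (s n).2.1, fun n ↦ (s n).2.2.1,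
    fun n ↦ (s n).2.2.2, fun n ↦ (hs n).1, fun A hA ↦ ?_⟩, fun x ↦ by simp [hs₀, embed],
    fun x ↦ by simp [hs₀, embed]⟩
  obtain ⟨n, hn⟩ := hC ⟨A, hA⟩
  have hdet := (hs n).2
  rw [hn] at hdet
  exact ⟨n + 1, hdet⟩

theorem DynamicalSimplex.homogeneous (hK : DynamicalSimplex K) {P Q : X → ι}
    (hP : IsLocallyConstant P) (hQ : IsLocallyConstant Q) (h : Matched K P Q) :
    ∃ φ : X ≃ₜ X, PreservesAll K φ ∧ ∀ x, Q (φ x) = P x := by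
  obtain ⟨P', Q', htower, hP', hQ'⟩ := hK.exists_matchedTower hP hQ h
  obtain ⟨φ, hφ, hφ'⟩ := htower.exists_homeomorph hK
  exact ⟨φ, hφ, fun x ↦ by rw [← hP', ← hQ', hφ']⟩

lemma PreservesAll.exists_restrict {g : X ≃ₜ X} (hg : PreservesAll K g) {A : Set X}
    (hA : IsClopen A) (hgA : ∀ x, g x ∈ A ↔ x ∈ A) :
    ∃ g' : X ≃ₜ X, PreservesAll K g' ∧ SupportedIn g' A ∧ ∀ x ∈ A, g' x = g x := by
  classical
  have hgA' (x) : g.symm x ∈ A ↔ x ∈ A := by rw [← hgA, g.apply_symm_apply]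
  have hcont (k : X ≃ₜ X) : Continuous (A.piecewise k id) :=
    k.continuous.piecewise (by simp [hA.frontier_eq]) continuous_id
  refine ⟨⟨⟨A.piecewise g id, A.piecewise g.symm id, fun x ↦ ?_, fun x ↦ ?_⟩, hcont g,
    hcont g.symm⟩, fun μ hμ ↦ preserves_of_forall_isClopen fun B hB ↦ ?_,
    fun x hx ↦ A.piecewise_eq_of_notMem _ _ hx, fun x hx ↦ A.piecewise_eq_of_mem _ _ hx⟩
  · by_cases hx : x ∈ A <;> simp [hx, hgA]
  · by_cases hx : x ∈ A <;> simp [hx, hgA']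
  · have hpre : A.piecewise g id ⁻¹' B = g ⁻¹' (B ∩ A) ∪ B \ A := by
      ext x
      by_cases hx : x ∈ A <;> simp [hx, hgA]
    have hdisj : Disjoint (g ⁻¹' (B ∩ A)) (B \ A) :=
      Set.disjoint_left.2 fun x hx hx' ↦ hx'.2 ((hgA x).1 hx.2)
    apply NNReal.coe_injective
    change (μ (A.piecewise g id ⁻¹' B) : ℝ) = μ B
    rw [hpre, coe_union μ hdisj (hB.diff hA).isOpen.measurableSet,
      (hg μ hμ).measure_preimage (hB.inter hA).isOpen.measurableSet,
      coe_inter_add_sdiff μ B hA.isOpen.measurableSet]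

theorem DynamicalSimplex.homogeneousOn (hK : DynamicalSimplex K) {P Q : X → ι}
    (hP : IsLocallyConstant P) (hQ : IsLocallyConstant Q) {A : Set X} (hA : IsClopen A)
    (h : ∀ i, ∀ μ ∈ K, μ (A ∩ P ⁻¹' {i}) = μ (A ∩ Q ⁻¹' {i})) :
    ∃ φ : X ≃ₜ X, PreservesAll K φ ∧ SupportedIn φ A ∧ ∀ x ∈ A, Q (φ x) = P x := by
  classical
  let extend (R : X → ι) : X → Option ι := A.piecewise (some ∘ R) fun _ ↦ none
  have hlc {R : X → ι} (hR : IsLocallyConstant R) : IsLocallyConstant (extend R) :=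
    isLocallyConstant_piecewise hA (hR.comp some) (.const none)
  have hsome (R : X → ι) (i) : extend R ⁻¹' {some i} = A ∩ R ⁻¹' {i} := by
    ext x; by_cases hx : x ∈ A <;> simp [extend, hx]
  have hnone (R : X → ι) : extend R ⁻¹' {none} = Aᶜ := by
    ext x; by_cases hx : x ∈ A <;> simp [extend, hx]
  have hmatched : Matched K (extend P) (extend Q) := by
    refine matched_of_fibers (hlc hP) (hlc hQ) ?_
    rintro (_ | i) μ hμ
    · rw [hnone, hnone]
    · rw [hsome, hsome, h i μ hμ]
  obtain ⟨φ, hφ, hφlabel⟩ := hK.homogeneous (hlc hP) (hlc hQ) hmatched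
  have hφA (x) : φ x ∈ A ↔ x ∈ A := by
    have := hφlabel x
    by_cases hx : x ∈ A <;> by_cases hφx : φ x ∈ A <;> simp_all [extend]
  obtain ⟨φ', hφ', hsupp, heq⟩ := hφ.exists_restrict hA hφA
  refine ⟨φ', hφ', hsupp, fun x hx ↦ ?_⟩
  simpa [extend, hx, (hφA x).2 hx, heq x hx] using hφlabel x

end Homogeneity

/-! ### Hitting times and return maps -/

section HitTime

variable {X : Type*} {g : X → X} {D : Set X} {x : X} {m k : ℕ}

/-- Every forward orbit of `g` meets `D`. -/
def OrbitsMeet (g : X → X) (D : Set X) : Prop :=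
  ∀ x, ∃ k, g^[k] x ∈ D

/-- The first time, counted from `0`, at which the orbit of `x` is in `D` (junk value `0` if the
orbit avoids `D`). -/
noncomputable def hitTime (g : X → X) (D : Set X) (x : X) : ℕ :=
  sInf {k | g^[k] x ∈ D}

/-- The first positive time at which the orbit of `x` is in `D`. -/
noncomputable def returnTime (g : X → X) (D : Set X) (x : X) : ℕ :=
  hitTime g D (g x) + 1

/-- The first point of the orbit of `x`, starting with `x` itself, which lies in `D`. -/
noncomputable def entry (g : X → X) (D : Set X) (x : X) : X :=
  g^[hitTime g D x] x

/-- The sum of `F` over the orbit of `x` until it enters `D`, the entry point being excluded. -/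
noncomputable def entrySum {M : Type*} [AddCommMonoid M] (g : X → X) (D : Set X) (F : X → M)
    (x : X) : M :=
  birkhoffSum g F (hitTime g D x) x

lemma hitTime_of_mem (hx : x ∈ D) : hitTime g D x = 0 :=
  Nat.sInf_eq_zero.2 (Or.inl hx)

lemma iterate_notMem_of_lt_hitTime (h : k < hitTime g D x) : g^[k] x ∉ D :=
  Nat.notMem_of_lt_sInf h

lemma hitTime_eq (hm : g^[m] x ∈ D) (h : ∀ k < m, g^[k] x ∉ D) : hitTime g D x = m :=
  (Nat.sInf_le hm).antisymm <| not_lt.1 fun hlt ↦ h _ hlt <|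
    Nat.sInf_mem (s := {k | g^[k] x ∈ D}) ⟨m, hm⟩

lemma returnTime_eq (hm₀ : 0 < m) (hm : g^[m] x ∈ D) (h : ∀ k, 0 < k → k < m → g^[k] x ∉ D) :
    returnTime g D x = m := by
  obtain ⟨m, rfl⟩ := Nat.exists_eq_succ_of_ne_zero hm₀.ne'
  exact congrArg Nat.succ <| hitTime_eq hm fun k hk ↦ h (k + 1) k.succ_pos (Nat.succ_lt_succ hk)

lemma iterate_notMem_of_lt_returnTime (hk₀ : 0 < k) (hk : k < returnTime g D x) :
    g^[k] x ∉ D := by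
  obtain ⟨k, rfl⟩ := Nat.exists_eq_succ_of_ne_zero hk₀.ne'
  exact iterate_notMem_of_lt_hitTime (x := g x) (Nat.lt_of_succ_lt_succ hk)

lemma iterate_returnTime : g^[returnTime g D x] x = entry g D (g x) := rfl

lemma entry_of_mem (hx : x ∈ D) : entry g D x = x := by
  rw [entry, hitTime_of_mem hx, Function.iterate_zero_apply]

section EntrySum

variable {M : Type*} [AddCommMonoid M] (F : X → M)

lemma entrySum_of_mem (hx : x ∈ D) : entrySum g D F x = 0 := by
  rw [entrySum, hitTime_of_mem hx, birkhoffSum_zero]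

lemma birkhoffSum_returnTime :
    birkhoffSum g F (returnTime g D x) x = F x + entrySum g D F (g x) :=
  birkhoffSum_succ' g F _ x

end EntrySum

namespace OrbitsMeet

variable (h : OrbitsMeet g D)
include h

lemma entry_mem (x : X) : entry g D x ∈ D := Nat.sInf_mem (h x)

lemma iterate_returnTime_mem (x : X) : g^[returnTime g D x] x ∈ D := h.entry_mem (g x)

lemma hitTime_of_notMem (hx : x ∉ D) : hitTime g D x = returnTime g D x := by
  refine hitTime_eq (h.iterate_returnTime_mem x) fun k hk ↦ ?_
  rcases k.eq_zero_or_pos with rfl | hk₀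
  exacts [hx, iterate_notMem_of_lt_returnTime hk₀ hk]

lemma entry_of_notMem (hx : x ∉ D) : entry g D x = entry g D (g x) := by
  rw [entry, h.hitTime_of_notMem hx, iterate_returnTime]

lemma entrySum_of_notMem {M : Type*} [AddCommMonoid M] (F : X → M) (hx : x ∉ D) :
    entrySum g D F x = F x + entrySum g D F (g x) := by
  rw [entrySum, h.hitTime_of_notMem hx, birkhoffSum_returnTime]

lemma injective_return (hg : Function.Injective g) :
    Function.Injective fun x ↦ g^[D.indicator (returnTime g D) x] x := by
  have eq_of_le {x y : X} (hx : x ∈ D) (hle : returnTime g D x ≤ returnTime g D y)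
      (hxy : g^[returnTime g D x] x = g^[returnTime g D y] y) : x = y := by
    rw [← Nat.add_sub_of_le hle, Function.iterate_add_apply] at hxy
    have hxy := hg.iterate _ hxy
    rcases Nat.eq_zero_or_pos (returnTime g D y - returnTime g D x) with h₀ | hpos
    · rwa [h₀] at hxy
    · exact absurd (hxy ▸ hx) <|
        iterate_notMem_of_lt_returnTime hpos (Nat.sub_lt_self (Nat.succ_pos _) hle)
  intro x y hxy
  by_cases hx : x ∈ D <;> by_cases hy : y ∈ D <;>
    simp only [Set.indicator, hx, hy, if_true, if_false, Function.iterate_zero_apply] at hxy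
  · rcases le_total (returnTime g D x) (returnTime g D y) with hle | hle
    exacts [eq_of_le hx hle hxy, (eq_of_le hy hle hxy.symm).symm]
  · exact absurd (hxy ▸ h.iterate_returnTime_mem x) hy
  · exact absurd (hxy ▸ h.iterate_returnTime_mem y) hx
  · exact hxy

variable [TopologicalSpace X]

lemma isLocallyConstant_hitTime (hg : Continuous g) (hD : IsClopen D) :
    IsLocallyConstant (hitTime g D) := by
  refine IsLocallyConstant.iff_isOpen_fiber.2 fun n ↦ ?_
  have hfiber : hitTime g D ⁻¹' {n} =
      g^[n] ⁻¹' D ∩ ⋂ k ∈ Finset.range n, g^[k] ⁻¹' Dᶜ := by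
    ext x
    simp only [Set.mem_preimage, Set.mem_singleton_iff, Set.mem_inter_iff, Set.mem_iInter,
      Finset.mem_range]
    refine ⟨?_, fun hx ↦ hitTime_eq hx.1 hx.2⟩
    rintro rfl
    exact ⟨h.entry_mem x, fun k ↦ iterate_notMem_of_lt_hitTime⟩
  rw [hfiber]
  exact (hD.isOpen.preimage (hg.iterate n)).inter <| isOpen_biInter_finset fun k _ ↦
    hD.compl.isOpen.preimage (hg.iterate k)

lemma isLocallyConstant_returnTime (hg : Continuous g) (hD : IsClopen D) :
    IsLocallyConstant (returnTime g D) :=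
  ((h.isLocallyConstant_hitTime hg hD).comp_continuous hg).comp Nat.succ

lemma continuous_entry (hg : Continuous g) (hD : IsClopen D) : Continuous (entry g D) :=
  continuous_dep (h.isLocallyConstant_hitTime hg hD) hg.iterate

lemma isLocallyConstant_entrySum {M : Type*} [AddCommMonoid M] (hg : Continuous g)
    (hD : IsClopen D) {F : X → M} (hF : IsLocallyConstant F) :
    IsLocallyConstant (entrySum g D F) :=
  isLocallyConstant_dep (h.isLocallyConstant_hitTime hg hD)
    (isLocallyConstant_birkhoffSum hg hF)

end OrbitsMeet

end HitTime

section ReturnHomeo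

/-- The map does not increase measures, because it is injective and given piecewise by iterates of
`g`; so it preserves them, having the same total mass. -/
lemma measurePreserving_iterate_of_injective {X : Type*} [MeasurableSpace X] {μ : Measure X}
    [IsFiniteMeasure μ] {g : X ≃ᵐ X} (hg : MeasurePreserving g μ μ) {c : X → ℕ} (hc : Measurable c)
    (hinj : Function.Injective fun x ↦ g^[c x] x) : MeasurePreserving (fun x ↦ g^[c x] x) μ μ := by
  set φ : X → X := fun x ↦ g^[c x] x
  have hpre (A : Set X) : φ ⁻¹' A = ⋃ n, c ⁻¹' {n} ∩ g^[n] ⁻¹' A := by ext; simp [φ]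
  have hφ : Measurable φ := fun A hA ↦ by
    rw [hpre]
    exact .iUnion fun n ↦ (hc (.singleton n)).inter (g.measurable.iterate n hA)
  have himage (n : ℕ) : MeasurableSet (g^[n] '' (c ⁻¹' {n})) := by
    have : MeasurableEmbedding g^[n] := by
      induction n with
      | zero => exact MeasurableEmbedding.id
      | succ n ih => exact ih.comp g.measurableEmbedding
    exact this.measurableSet_image.2 (hc (.singleton n))
  have hdisj : Pairwise (Function.onFun Disjoint fun n ↦ g^[n] '' (c ⁻¹' {n})) := by
    intro i j hij
    refine Set.disjoint_left.2 ?_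
    rintro _ ⟨x, rfl, rfl⟩ ⟨y, rfl, hxy⟩
    exact hij (congrArg c (hinj hxy).symm)
  have hle : μ.map φ ≤ μ := Measure.le_iff.2 fun A hA ↦ by
    rw [Measure.map_apply hφ hA, hpre]
    calc μ (⋃ n, c ⁻¹' {n} ∩ g^[n] ⁻¹' A)
        ≤ ∑' n, μ (c ⁻¹' {n} ∩ g^[n] ⁻¹' A) := measure_iUnion_le _
      _ = ∑' n, μ (g^[n] '' (c ⁻¹' {n}) ∩ A) := by
          refine tsum_congr fun n ↦ ?_
          rw [← (hg.iterate n).measure_preimage ((himage n).inter hA).nullMeasurableSet,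
            Set.preimage_inter, Set.preimage_image_eq _ (g.injective.iterate n)]
      _ = μ (⋃ n, g^[n] '' (c ⁻¹' {n}) ∩ A) := (measure_iUnion
          (fun i j hij ↦ (hdisj hij).mono Set.inter_subset_left Set.inter_subset_left)
          fun n ↦ (himage n).inter hA).symm
      _ ≤ μ A := measure_mono (by simp)
  exact ⟨hφ, Measure.eq_of_le_of_measure_univ_eq hle (by simp [Measure.map_apply hφ])⟩

lemma FullSupport.surjective {X : Type*} [TopologicalSpace X] [CompactSpace X] [T2Space X]
    [MeasurableSpace X] [BorelSpace X] {μ : ProbabilityMeasure X} (hμ : FullSupport μ) {φ : X → X}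
    (hφ : Continuous φ) (h : MeasurePreserving φ (μ : Measure X) (μ : Measure X)) :
    Function.Surjective φ := by
  by_contra hns
  rw [← Set.range_eq_univ, ← ne_eq, ← Set.nonempty_compl] at hns
  have hclosed : IsClosed (Set.range φ) := (isCompact_range hφ).isClosed
  have hnull : (μ : Measure X) (Set.range φ)ᶜ = 0 := by
    rw [← h.measure_preimage hclosed.measurableSet.compl.nullMeasurableSet]
    simp
  exact (hμ _ hclosed.isOpen_compl hns).ne' ((μ.null_iff_toMeasure_null _).2 hnull)

variable {X : Type*} [TopologicalSpace X] [CompactSpace X] [T2Space X] [MeasurableSpace X]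
  [BorelSpace X] {K : Set (ProbabilityMeasure X)}

lemma DynamicalSimplex.exists_homeomorph_iterate (hK : DynamicalSimplex K) {g : X ≃ₜ X}
    (hg : PreservesAll K g) {c : X → ℕ} (hc : IsLocallyConstant c)
    (hinj : Function.Injective fun x ↦ g^[c x] x) :
    ∃ R : X ≃ₜ X, PreservesAll K R ∧ ∀ x, R x = g^[c x] x := by
  have hφ : Continuous fun x ↦ g^[c x] x := continuous_dep hc g.continuous.iterate
  have hpres {μ} (hμ : μ ∈ K) := measurePreserving_iterate_of_injective
    (g := g.toMeasurableEquiv) (preserves_iff.1 (hg μ hμ)) hc.continuous.measurable hinj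
  obtain ⟨μ, hμ⟩ := hK.nonempty
  let e : X ≃ X := .ofBijective _ ⟨hinj, (hK.fullSupport hμ).surjective hφ (hpres hμ)⟩
  exact ⟨Continuous.homeoOfEquivCompactToT2 (f := e) hφ,
    fun μ hμ ↦ preserves_iff.2 (hpres hμ), fun x ↦ rfl⟩

lemma DynamicalSimplex.exists_return (hK : DynamicalSimplex K) {g : X ≃ₜ X}
    (hg : PreservesAll K g) {D : Set X} (hD : IsClopen D) (h : OrbitsMeet g D) :
    ∃ R : X ≃ₜ X, PreservesAll K R ∧ SupportedIn R D ∧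
      ∀ x ∈ D, R x = g^[returnTime g D x] x := by
  obtain ⟨R, hR, hRx⟩ := hK.exists_homeomorph_iterate hg
    (isLocallyConstant_indicator hD (h.isLocallyConstant_returnTime g.continuous hD))
    (h.injective_return g.injective)
  exact ⟨R, hR, fun x hx ↦ by simp [hRx, hx], fun x hx ↦ by simp [hRx, hx]⟩

end ReturnHomeo

section Composition

variable {X : Type*} [TopologicalSpace X] {g γ : X ≃ₜ X} {D : Set X}

lemma SupportedIn.iterate_trans (hγ : SupportedIn γ D) {x : X} {k : ℕ}
    (hk : k < returnTime g D x) : (g.trans γ)^[k] x = g^[k] x := by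
  induction k with
  | zero => rfl
  | succ k ih =>
    rw [Function.iterate_succ_apply', ih (by lia), Homeomorph.trans_apply,
      ← Function.iterate_succ_apply' g, hγ _ (iterate_notMem_of_lt_returnTime k.succ_pos hk)]

lemma SupportedIn.iterate_returnTime_trans (hγ : SupportedIn γ D) (x : X) :
    (g.trans γ)^[returnTime g D x] x = γ (g^[returnTime g D x] x) := by
  rw [returnTime, Function.iterate_succ_apply', hγ.iterate_trans (Nat.lt_succ_self _),
    Homeomorph.trans_apply, ← Function.iterate_succ_apply' g]

lemma SupportedIn.orbitsMeet_trans (hγ : SupportedIn γ D) (h : OrbitsMeet g D) :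
    OrbitsMeet (g.trans γ) D := fun x ↦ ⟨returnTime g D x, by
  rw [hγ.iterate_returnTime_trans, hγ.apply_mem_iff]
  exact h.iterate_returnTime_mem x⟩

lemma SupportedIn.returnTime_trans (hγ : SupportedIn γ D) (h : OrbitsMeet g D) (x : X) :
    returnTime (g.trans γ) D x = returnTime g D x := by
  refine returnTime_eq (Nat.succ_pos _) ?_ fun k hk₀ hk ↦ ?_
  · rw [hγ.iterate_returnTime_trans, hγ.apply_mem_iff]
    exact h.iterate_returnTime_mem x
  · rw [hγ.iterate_trans hk]
    exact iterate_notMem_of_lt_returnTime hk₀ hk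

lemma SupportedIn.birkhoffSum_trans {M : Type*} [AddCommMonoid M] (hγ : SupportedIn γ D)
    (F : X → M) (x : X) :
    birkhoffSum (g.trans γ) F (returnTime g D x) x = birkhoffSum g F (returnTime g D x) x :=
  Finset.sum_congr rfl fun k hk ↦ by rw [hγ.iterate_trans (Finset.mem_range.1 hk)]

end Composition

section Transfer

variable {X : Type*} [TopologicalSpace X]

/-- `h` witnesses that `F` is `g`-cohomologous to the nonnegative function `F + h ∘ g - h`; it
vanishes on the clopen set `D`, which every forward orbit of `g` meets. -/
structure IsTransfer (g : X → X) (F h : X → ℤ) (D : Set X) : Prop where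
  isLocallyConstant : IsLocallyConstant h
  isClopen : IsClopen D
  eq_zero : ∀ x ∈ D, h x = 0
  nonneg (x : X) : 0 ≤ F x + h (g x) - h x
  orbitsMeet : OrbitsMeet g D

/-- Solving the cohomology problem for the return map of `G` to `D` solves it for `G`. -/
lemma IsTransfer.of_return {G S : X → X} (hG : Continuous G) {D E : Set X} (hD : IsClopen D)
    (hGD : OrbitsMeet G D) {F F₁ h : X → ℤ} (hF : IsLocallyConstant F)
    (hS : ∀ x ∈ D, S x = G^[returnTime G D x] x)
    (hF₁ : ∀ x ∈ D, F₁ x ≤ birkhoffSum G F (returnTime G D x) x) (h₁ : IsTransfer S F₁ h E) :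
    IsTransfer G F (entrySum G D F + h ∘ entry G D) (E ∩ D) where
  isLocallyConstant := isLocallyConstant_add (hGD.isLocallyConstant_entrySum hG hD hF)
    (h₁.isLocallyConstant.comp_continuous (hGD.continuous_entry hG hD))
  isClopen := h₁.isClopen.inter hD
  eq_zero x hx := by
    simp [entrySum_of_mem F hx.2, entry_of_mem hx.2, h₁.eq_zero x hx.1]
  nonneg x := by
    simp only [Pi.add_apply, Function.comp_apply]
    by_cases hx : x ∈ D
    · have hle := hF₁ x hx
      have hnonneg := h₁.nonneg x
      rw [hS x hx, iterate_returnTime] at hnonneg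
      rw [birkhoffSum_returnTime] at hle
      rw [entrySum_of_mem F hx, entry_of_mem hx]
      linarith
    · rw [hGD.entrySum_of_notMem F hx, hGD.entry_of_notMem hx]
      linarith
  orbitsMeet x := by
    have hstep (n : ℕ) : S^[n] (entry G D x) ∈ D ∧ ∃ k, G^[k] x = S^[n] (entry G D x) := by
      induction n with
      | zero => exact ⟨hGD.entry_mem x, hitTime G D x, rfl⟩
      | succ n ih =>
        obtain ⟨hmem, k, hk⟩ := ih
        rw [Function.iterate_succ_apply', hS _ hmem]
        exact ⟨hGD.iterate_returnTime_mem _, _, by rw [← hk, ← Function.iterate_add_apply]⟩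
    obtain ⟨n, hn⟩ := h₁.orbitsMeet (entry G D x)
    obtain ⟨hmem, k, hk⟩ := hstep n
    exact ⟨k, hk ▸ ⟨hn, hmem⟩⟩

variable [MeasurableSpace X] {K : Set (ProbabilityMeasure X)} {B B' : Set X} {F F' : X → ℤ}

/-- Some `K`-preserving homeomorphism supported in `B` makes `F` cohomologous to a nonnegative
function, by a transfer function which vanishes off `B`. -/
def Solvable (K : Set (ProbabilityMeasure X)) (B : Set X) (F : X → ℤ) : Prop :=
  ∃ S : X ≃ₜ X, PreservesAll K S ∧ SupportedIn S B ∧ ∃ h D, Bᶜ ⊆ D ∧ IsTransfer S F h D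

lemma Solvable.mono (h : Solvable K B F) (hB : B ⊆ B') (hF : F ≤ F') : Solvable K B' F' := by
  obtain ⟨S, hS, hSB, h, D, hBD, hT⟩ := h
  exact ⟨S, hS, hSB.mono hB, h, D, (Set.compl_subset_compl.2 hB).trans hBD,
    { hT with nonneg := fun x ↦ by linarith [hT.nonneg x, hF x] }⟩

lemma solvable_of_nonneg (hF : 0 ≤ F) : Solvable K B F :=
  ⟨.refl X, .refl, fun _ _ ↦ rfl, 0, Set.univ, Set.subset_univ _, .const 0, isClopen_univ,
    fun _ _ ↦ rfl, fun x ↦ by simpa using hF x, fun _ ↦ ⟨0, trivial⟩⟩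

variable [CompactSpace X] [T2Space X] [BorelSpace X]

/-- If `S` solves the problem for the return map `R` of `g` to `D`, then composing `g` with
`S ∘ R⁻¹` turns the return map into `S`. -/
lemma DynamicalSimplex.exists_isTransfer_trans (hK : DynamicalSimplex K) {g : X ≃ₜ X}
    (hg : PreservesAll K g) (hgB : SupportedIn g B) {D : Set X} (hD : IsClopen D) (hBD : Bᶜ ⊆ D)
    (hgD : OrbitsMeet g D) (hF : IsLocallyConstant F) {F₁ : X → ℤ}
    (hF₁ : ∀ x ∈ D, F₁ x ≤ birkhoffSum g F (returnTime g D x) x) (h : Solvable K (B ∩ D) F₁) :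
    ∃ γ : X ≃ₜ X, PreservesAll K γ ∧ SupportedIn γ (B ∩ D) ∧
      ∃ h E, (B ∩ D)ᶜ ⊆ E ∧ IsTransfer (g.trans γ) F h (E ∩ D) := by
  obtain ⟨S, hS, hSB, h, E, hE, hT⟩ := h
  obtain ⟨R, hR, hRD, hRx⟩ := hK.exists_return hg hD hgD
  have hRB : SupportedIn R (B ∩ D) := fun x hx ↦ by
    by_cases hxB : x ∈ B
    · exact hRD x fun hxD ↦ hx ⟨hxB, hxD⟩
    · rw [hRx x (hBD hxB), iterate_returnTime, hgB x hxB, entry_of_mem (hBD hxB)]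
  have hγ : SupportedIn (R.symm.trans S) (B ∩ D) := hRB.symm.trans hSB
  have hγD := hγ.mono Set.inter_subset_right
  refine ⟨R.symm.trans S, hR.symm.trans hS, hγ, _, E, hE,
    hT.of_return (g.trans _).continuous hD (hγD.orbitsMeet_trans hgD) hF ?_ ?_⟩
  · intro x hx
    rw [hγD.returnTime_trans hgD, hγD.iterate_returnTime_trans, ← hRx x hx]
    simp
  · intro x hx
    rw [hγD.returnTime_trans hgD, hγD.birkhoffSum_trans]
    exact hF₁ x hx

lemma DynamicalSimplex.solvable_of_induced (hK : DynamicalSimplex K) {g : X ≃ₜ X}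
    (hg : PreservesAll K g) (hgB : SupportedIn g B) {D : Set X} (hD : IsClopen D) (hBD : Bᶜ ⊆ D)
    (hgD : OrbitsMeet g D) (hF : IsLocallyConstant F) {F₁ : X → ℤ}
    (hF₁ : ∀ x ∈ D, F₁ x ≤ birkhoffSum g F (returnTime g D x) x) (h : Solvable K (B ∩ D) F₁) :
    Solvable K B F := by
  obtain ⟨γ, hγ, hγB, h, E, hE, hT⟩ := hK.exists_isTransfer_trans hg hgB hD hBD hgD hF hF₁ h
  exact ⟨g.trans γ, hg.trans hγ, hgB.trans (hγB.mono Set.inter_subset_left), h, E ∩ D,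
    Set.subset_inter ((Set.compl_subset_compl.2 Set.inter_subset_left).trans hE) hBD, hT⟩

end Transfer

/-! ### Dividing a clopen set into cyclically permuted pieces -/

/-- `σ` cyclically permutes the `κ` levels `{x ∈ M | l x = i}` of the clopen set `M`, fixing the
complement of `M`, and `F` is `σ`-invariant on `M`. -/
structure IsTower {X : Type*} [TopologicalSpace X] {κ : ℕ} (σ : X ≃ₜ X) (M : Set X)
    (l : X → ZMod κ) (F : X → ℤ) : Prop where
  isClopen : IsClopen M
  isLocallyConstant : IsLocallyConstant l
  supportedIn : SupportedIn σ M
  level_apply : ∀ x ∈ M, l (σ x) = l x + 1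
  invariant : ∀ x ∈ M, F (σ x) = F x

section PartialLabelling

variable {X ι : Type*} [TopologicalSpace X] [MeasurableSpace X] [OpensMeasurableSpace X]
  {K : Set (ProbabilityMeasure X)} {B : Set X}

lemma Good.exists_partial_labelling (hK : Good K) (hB : IsClopen B) {Q : Set X} (hQ : IsClopen Q)
    (s : Finset ι) (h : Q = ∅ ∨ ∀ μ ∈ K, s.card * (μ Q : ℝ) < μ B) :
    ∃ l : X → Option ι, IsLocallyConstant l ∧ (∀ x i, l x = some i → i ∈ s) ∧
      (∀ i ∈ s, ∀ μ ∈ K, μ (B ∩ l ⁻¹' {some i}) = μ Q) ∧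
      ∀ μ ∈ K, (μ (B ∩ l ⁻¹' {none}) : ℝ) = μ B - s.card * μ Q := by
  classical
  induction s using Finset.induction_on with
  | empty => exact ⟨fun _ ↦ none, .const _, by simp, by simp, by simp⟩
  | insert i s hi ih =>
    rw [Finset.card_insert_of_notMem hi] at h ⊢
    push_cast at h ⊢
    have hlt {μ : ProbabilityMeasure X} : (s.card + 1) * (μ Q : ℝ) < μ B →
        (μ Q : ℝ) < μ B - s.card * μ Q := by intro; linarith
    obtain ⟨l, hl, hls, hlQ, hl₀⟩ := ih <| h.imp_right fun h μ hμ ↦ by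
      linarith [h μ hμ, (μ Q).coe_nonneg]
    have hrest : IsClopen (B ∩ l ⁻¹' {none}) := hB.inter (isClopen_preimage hl _)
    obtain ⟨C, hC, hCB, hCμ⟩ : ∃ C, IsClopen C ∧ C ⊆ B ∩ l ⁻¹' {none} ∧ ∀ μ ∈ K, μ C = μ Q := by
      rcases h with rfl | h
      · exact ⟨∅, hQ, Set.empty_subset _, fun _ _ ↦ rfl⟩
      · exact hK Q _ hQ hrest fun μ hμ ↦ NNReal.coe_lt_coe.1 (hl₀ μ hμ ▸ hlt (h μ hμ))
    have hCl {x} (hx : x ∈ C) : x ∈ B ∧ l x = none := hCB hx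
    refine ⟨C.piecewise (fun _ ↦ some i) l, isLocallyConstant_piecewise hC (.const _) hl,
      fun x j hj ↦ ?_, fun j hj μ hμ ↦ ?_, fun μ hμ ↦ ?_⟩
    · by_cases hx : x ∈ C <;> simp only [hx, Set.piecewise_eq_of_mem, Set.piecewise_eq_of_notMem,
        not_false_eq_true, Option.some_inj] at hj
      exacts [hj ▸ Finset.mem_insert_self i s, Finset.mem_insert_of_mem (hls x j hj)]
    · rcases Finset.mem_insert.1 hj with rfl | hj
      · rw [← hCμ μ hμ]
        congr 1; ext x
        by_cases hx : x ∈ C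
        · simp [hx, hCl hx]
        · simpa [hx] using fun _ h ↦ hi (hls x j h)
      · rw [← hlQ j hj μ hμ]
        congr 1; ext x
        by_cases hx : x ∈ C
        · simpa [hx, hCl hx] using fun h : i = j ↦ hi (h ▸ hj)
        · simp [hx]
    · have hset : B ∩ C.piecewise (fun _ ↦ some i) l ⁻¹' {none} = (B ∩ l ⁻¹' {none}) \ C := by
        ext x; by_cases hx : x ∈ C <;> simp [hx]
      rw [hset, coe_sdiff μ hCB hC.isOpen.measurableSet, hl₀ μ hμ, hCμ μ hμ]
      ring

end PartialLabelling

section Division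

variable {X ι : Type*} [TopologicalSpace X] [CompactSpace X] [TopologicalSpace.MetrizableSpace X]
  [TotallyDisconnectedSpace X] [MeasurableSpace X] [BorelSpace X]
  {K : Set (ProbabilityMeasure X)} {B : Set X}

lemma DynamicalSimplex.exists_strict_divisor (hK : DynamicalSimplex K) (hB : IsClopen B) {κ : ℕ}
    (hκ : 1 ≤ κ) {ε : ℝ} (hε : 0 < ε) :
    ∃ Q : Set X, IsClopen Q ∧ (∀ μ ∈ K, (μ B : ℝ) - ε ≤ κ * (μ Q : ℝ)) ∧
      (Q = ∅ ∨ ∀ μ ∈ K, κ * (μ Q : ℝ) < μ B) := by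
  have hκ₀ : (0 : ℝ) < κ := by exact_mod_cast hκ
  obtain ⟨Q, hQ, -, hQμ⟩ := hK.approximatelyDivisible B hB κ hκ (ε / 2) (half_pos hε)
  rcases Q.eq_empty_or_nonempty with rfl | ⟨x, hx⟩
  · exact ⟨∅, hQ, fun μ hμ ↦ by linarith [(hQμ μ hμ).1], Or.inl rfl⟩
  · obtain ⟨A, hA, hxA, hAQ, hAμ⟩ := exists_isClopen_forall_lt hK.isCompact
      (fun μ hμ ↦ hK.atomless hμ) hQ.isOpen hx (ε := ε / (2 * κ)) (by positivity)
    refine ⟨Q \ A, hQ.diff hA, fun μ hμ ↦ ?_, Or.inr fun μ hμ ↦ ?_⟩ <;>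
      rw [coe_sdiff μ hAQ hA.isOpen.measurableSet, mul_sub]
    · have hlt := (lt_div_iff₀ (by positivity)).1 (hAμ μ hμ)
      linarith [(hQμ μ hμ).1]
    · have hpos := mul_pos hκ₀ (hK.pos hμ hA.isOpen ⟨x, hxA⟩)
      linarith [(hQμ μ hμ).2]

lemma DynamicalSimplex.exists_almost_labelling [Finite ι] [Nonempty ι] (hK : DynamicalSimplex K)
    (hB : IsClopen B) {ε : ℝ} (hε : 0 < ε) :
    ∃ l : X → Option ι, IsLocallyConstant l ∧
      (∀ i j, ∀ μ ∈ K, μ (B ∩ l ⁻¹' {some i}) = μ (B ∩ l ⁻¹' {some j})) ∧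
      ∀ μ ∈ K, (μ (B ∩ l ⁻¹' {none}) : ℝ) ≤ ε := by
  have := Fintype.ofFinite ι
  obtain ⟨Q, hQ, hQε, hQB⟩ := hK.exists_strict_divisor hB (Fintype.card_pos (α := ι)) hε
  obtain ⟨l, hl, -, hlQ, hl₀⟩ := hK.good.exists_partial_labelling hB hQ (Finset.univ (α := ι)) hQB
  refine ⟨l, hl, fun i j μ hμ ↦ ?_, fun μ hμ ↦ ?_⟩
  · rw [hlQ i (Finset.mem_univ i) μ hμ, hlQ j (Finset.mem_univ j) μ hμ]
  · rw [hl₀ μ hμ, Finset.card_univ]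
    linarith [hQε μ hμ]

lemma DynamicalSimplex.exists_almost_labelling_fiberwise [Finite ι] [Nonempty ι]
    (hK : DynamicalSimplex K) (hB : IsClopen B) {F : X → ℤ} (hF : IsLocallyConstant F) {ε : ℝ}
    (hε : 0 < ε) :
    ∃ l : X → Option ι, IsLocallyConstant l ∧
      (∀ a i j, ∀ μ ∈ K, μ (B ∩ F ⁻¹' {a} ∩ l ⁻¹' {some i}) =
        μ (B ∩ F ⁻¹' {a} ∩ l ⁻¹' {some j})) ∧
      ∀ μ ∈ K, (μ (B ∩ l ⁻¹' {none}) : ℝ) < ε := by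
  let T := hF.range_finite.toFinset
  choose l hl hlμ hl₀ using fun a ↦ hK.exists_almost_labelling (ι := ι)
    (hB.inter (isClopen_preimage hF {a})) (ε := ε / (T.card + 1)) (by positivity)
  have hfiber (a : ℤ) (o : Option ι) : B ∩ F ⁻¹' {a} ∩ (fun x ↦ l (F x) x) ⁻¹' {o} =
      B ∩ F ⁻¹' {a} ∩ l a ⁻¹' {o} := by
    ext x
    simp only [Set.mem_inter_iff, Set.mem_preimage, Set.mem_singleton_iff]
    constructor <;> · rintro ⟨⟨hx, rfl⟩, h⟩; exact ⟨⟨hx, rfl⟩, h⟩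
  refine ⟨fun x ↦ l (F x) x, isLocallyConstant_dep hF hl, fun a i j μ hμ ↦ ?_, fun μ hμ ↦ ?_⟩
  · rw [hfiber, hfiber, hlμ a i j μ hμ]
  · have hcover : B ∩ (fun x ↦ l (F x) x) ⁻¹' {none} ⊆
        ⋃ a ∈ T, B ∩ F ⁻¹' {a} ∩ l a ⁻¹' {none} := fun x hx ↦
      Set.mem_biUnion (x := F x) (by simp [T]) ⟨⟨hx.1, rfl⟩, hx.2⟩
    calc (μ (B ∩ (fun x ↦ l (F x) x) ⁻¹' {none}) : ℝ)
        ≤ ∑ a ∈ T, (μ (B ∩ F ⁻¹' {a} ∩ l a ⁻¹' {none}) : ℝ) := (coe_mono μ hcover).trans <| by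
          simpa using measureReal_biUnion_finset_le (μ := (μ : Measure X)) T
            fun a ↦ B ∩ F ⁻¹' {a} ∩ l a ⁻¹' {none}
      _ ≤ T.card * (ε / (T.card + 1)) := by
          simpa using Finset.sum_le_card_nsmul T _ _ fun a _ ↦ hl₀ a μ hμ
      _ < ε := by
          rw [← mul_div_assoc, div_lt_iff₀ (by positivity)]
          linarith

lemma DynamicalSimplex.exists_isTower (hK : DynamicalSimplex K) (hB : IsClopen B) {F : X → ℤ}
    (hF : IsLocallyConstant F) {κ : ℕ} [NeZero κ] {ε : ℝ} (hε : 0 < ε) :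
    ∃ (σ : X ≃ₜ X) (M : Set X) (l : X → ZMod κ), PreservesAll K σ ∧ IsTower σ M l F ∧ M ⊆ B ∧
      ∀ μ ∈ K, (μ (B \ M) : ℝ) < ε := by
  obtain ⟨L, hL, hLμ, hL₀⟩ := hK.exists_almost_labelling_fiberwise (ι := ZMod κ) hB hF hε
  let M : Set X := B ∩ L ⁻¹' {none}ᶜ
  have hM : IsClopen M := hB.inter (isClopen_preimage hL _)
  have hmatched : ∀ i, ∀ μ ∈ K,
      μ (M ∩ (fun x ↦ ((L x).map (· + 1), F x)) ⁻¹' {i}) =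
      μ (M ∩ (fun x ↦ (L x, F x)) ⁻¹' {i}) := by
    rintro ⟨_ | i, a⟩ μ hμ
    · congr 1; ext x
      cases h : L x <;> simp [M, h]
    · convert hLμ a (i - 1) i μ hμ using 2 <;>
      · ext x
        cases h : L x <;> simp [M, h, and_assoc, and_comm, and_left_comm, eq_sub_iff_add_eq]
  obtain ⟨σ, hσ, hσM, hσx⟩ := hK.homogeneousOn ((hL.comp (Option.map (· + 1))).prodMk hF)
    (hL.prodMk hF) hM hmatched
  refine ⟨σ, M, fun x ↦ (L x).getD 0, hσ, ⟨hM, hL.comp (Option.getD · 0), hσM,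
    fun x hx ↦ ?_, fun x hx ↦ (Prod.mk.inj (hσx x hx)).2⟩, Set.inter_subset_left, fun μ hμ ↦ ?_⟩
  · obtain ⟨i, hi⟩ := Option.ne_none_iff_exists'.1 hx.2
    simp [(Prod.mk.inj (hσx x hx)).1, hi]
  · have hdiff : B \ M = B ∩ L ⁻¹' {none} := by ext; simp +contextual [M]
    exact hdiff ▸ hL₀ μ hμ

end Division

/-! ### Making a function with positive integrals cohomologous to a nonnegative one -/

section Counting

variable {κ : ℕ}

lemma card_lt_eq_max {a : ℤ} (ha : a ≤ κ) :
    (((Finset.range κ).filter fun k : ℕ ↦ (k : ℤ) < a).card : ℤ) = max a 0 := by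
  have : ((Finset.range κ).filter fun k : ℕ ↦ (k : ℤ) < a) = Finset.range a.toNat := by
    ext k
    simp only [Finset.mem_filter, Finset.mem_range, Int.lt_toNat, and_iff_right_iff_imp]
    lia
  simp [this]

lemma card_dvd_div {j : ℕ} (hκ : κ ≠ 0) (hj : j ∣ κ) :
    ((Finset.range κ).filter fun k ↦ κ / j ∣ k + 1).card = j := by
  rw [Nat.card_multiples, Nat.div_div_self hj hκ]

lemma abs_le_of_natAbs_dvd [NeZero κ] {a : ℤ} (ha : a ≠ 0 → a.natAbs ∣ κ) : |a| ≤ κ := by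
  rcases eq_or_ne a 0 with rfl | ha₀
  · simp
  · exact Int.abs_eq_natAbs _ ▸ Int.ofNat_le.2 (Nat.le_of_dvd (NeZero.pos κ) (ha ha₀))

end Counting

section Tower

variable {X : Type*} [TopologicalSpace X] {κ : ℕ} {σ : X ≃ₜ X} {M : Set X} {l : X → ZMod κ}
  {F : X → ℤ} {x : X}

lemma IsTower.iterate_mem (h : IsTower σ M l F) (hx : x ∈ M) (k : ℕ) : σ^[k] x ∈ M := by
  induction k with
  | zero => exact hx
  | succ k ih =>
    rw [Function.iterate_succ_apply', h.supportedIn.apply_mem_iff]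
    exact ih

lemma IsTower.level_iterate (h : IsTower σ M l F) (hx : x ∈ M) (k : ℕ) :
    l (σ^[k] x) = l x + k := by
  induction k with
  | zero => simp
  | succ k ih =>
    rw [Function.iterate_succ_apply', h.level_apply _ (h.iterate_mem hx k), ih]
    push_cast
    ring

lemma IsTower.iterate_invariant (h : IsTower σ M l F) (hx : x ∈ M) (k : ℕ) :
    F (σ^[k] x) = F x := by
  induction k with
  | zero => rfl
  | succ k ih =>
    rw [Function.iterate_succ_apply', h.invariant _ (h.iterate_mem hx k), ih]

lemma IsTower.birkhoffSum_eq (h : IsTower σ M l F) (hx : x ∈ M) (n : ℕ) :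
    birkhoffSum σ F n x = n * F x := by
  simp [birkhoffSum, h.iterate_invariant hx]

/-- `κ` consecutive points of a tower visit each level exactly once. -/
lemma IsTower.birkhoffSum_level [NeZero κ] {A : Type*} [AddCommMonoid A] (h : IsTower σ M l F)
    (hx : x ∈ M) (f : ℕ → A) :
    birkhoffSum σ (fun y ↦ f (l y).val) κ x = ∑ k ∈ Finset.range κ, f k := by
  have hval (f : ZMod κ → A) : ∑ k ∈ Finset.range κ, f k = ∑ i : ZMod κ, f i := by
    obtain ⟨n, rfl⟩ := Nat.exists_eq_succ_of_ne_zero (NeZero.ne κ)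
    rw [Finset.sum_range]
    exact Finset.sum_congr rfl fun i _ ↦ congrArg f (Fin.cast_val_eq_self i)
  calc birkhoffSum σ (fun y ↦ f (l y).val) κ x
      = ∑ k ∈ Finset.range κ, f (l x + k).val := by simp only [birkhoffSum, h.level_iterate hx]
    _ = ∑ i : ZMod κ, f i.val := (hval fun i ↦ f (l x + i).val).trans
        (Equiv.sum_comp (Equiv.addLeft (l x)) fun i ↦ f i.val)
    _ = ∑ k ∈ Finset.range κ, f k := by
        rw [← hval fun i ↦ f i.val]
        exact Finset.sum_congr rfl fun k hk ↦ by
          rw [ZMod.val_natCast_of_lt (Finset.mem_range.1 hk)]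

variable [CompactSpace X] [T2Space X] [MeasurableSpace X] [BorelSpace X]
  {K : Set (ProbabilityMeasure X)}

/-- Induce on the bottom level, where the function becomes its sum over a column. -/
lemma IsTower.solvable [NeZero κ] (hK : DynamicalSimplex K)
    (h : IsTower σ M l F) (hσ : PreservesAll K σ) {f : X → ℤ} (hf : IsLocallyConstant f)
    (hnonneg : ∀ x ∉ M, 0 ≤ f x) (hsum : ∀ x ∈ M, 0 ≤ birkhoffSum σ f κ x) : Solvable K M f := by
  have hlevel {x} (hx : x ∈ M) (k : ℕ) :
      σ^[k] x ∈ {y | y ∈ M → l y = 0} ↔ l x + k = 0 := by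
    simp [h.iterate_mem hx, h.level_iterate hx]
  refine hK.solvable_of_induced (D := {x | x ∈ M → l x = 0}) (F₁ := 0) hσ h.supportedIn ?_
    (fun x hx hxM ↦ absurd hxM hx) (fun x ↦ ?_) hf (fun x hx ↦ ?_) (solvable_of_nonneg le_rfl)
  · exact isClopen_preimage ((isLocallyConstant_mem h.isClopen).prodMk h.isLocallyConstant)
      {p | p.1 → p.2 = 0}
  · by_cases hxM : x ∈ M
    · exact ⟨(-l x).val, (hlevel hxM _).2 (by simp)⟩
    · exact ⟨0, fun hx ↦ absurd hx hxM⟩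
  · by_cases hxM : x ∈ M
    · have hreturn : returnTime σ {x | x ∈ M → l x = 0} x = κ :=
        returnTime_eq (NeZero.pos κ) ((hlevel hxM κ).2 (by simp [hx hxM])) fun k hk₀ hk ↦ by
          rw [hlevel hxM, hx hxM, zero_add, ZMod.natCast_eq_zero_iff]
          exact Nat.not_dvd_of_pos_of_lt hk₀ hk
      rw [hreturn]
      exact hsum x hxM
    · have hreturn : returnTime σ {x | x ∈ M → l x = 0} x = 1 :=
        returnTime_eq one_pos (by simpa [h.supportedIn x hxM] using hx) fun k hk₀ hk ↦ by lia
      rw [hreturn, birkhoffSum_one]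
      exact hnonneg x hxM

end Tower

section Debt

variable {X : Type*} [TopologicalSpace X] {B M : Set X} {F : X → ℤ} {κ : ℕ} {l : X → ZMod κ}
  {σ : X ≃ₜ X}

/-- The first `F x` points of each orbit of a tower on which `F > 0`. -/
def wealth (M : Set X) (l : X → ZMod κ) (F : X → ℤ) : Set X :=
  {x | x ∈ M ∧ ((l x).val : ℤ) < F x}

/-- The places in `B` where the negative values of `F` are collected: every `κ / |F x|`-th point
of each orbit of the tower `M`, and all points outside the tower. -/
def debt (B M : Set X) (l : X → ZMod κ) (F : X → ℤ) : Set X :=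
  {x | x ∈ B ∧ F x < 0 ∧ (x ∈ M → κ / (F x).natAbs ∣ (l x).val + 1)}

lemma isClopen_wealth (hM : IsClopen M) (hl : IsLocallyConstant l) (hF : IsLocallyConstant F) :
    IsClopen (wealth M l F) :=
  hM.inter (isClopen_preimage (hl.prodMk hF) {p | (p.1.val : ℤ) < p.2})

lemma isClopen_debt (hB : IsClopen B) (hM : IsClopen M) (hl : IsLocallyConstant l)
    (hF : IsLocallyConstant F) : IsClopen (debt B M l F) :=
  hB.inter (isClopen_preimage (hF.prodMk ((isLocallyConstant_mem hM).prodMk hl))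
    {p | p.1 < 0 ∧ (p.2.1 → κ / p.1.natAbs ∣ p.2.2.val + 1)})

lemma IsTower.birkhoffSum_wealth [NeZero κ] (h : IsTower σ M l F) (hFκ : ∀ x, F x ≤ κ) {x : X}
    (hx : x ∈ M) : birkhoffSum σ ((wealth M l F).indicator 1) κ x = max (F x) 0 := by
  classical
  calc birkhoffSum σ ((wealth M l F).indicator 1) κ x
      = birkhoffSum σ (fun y ↦ if ((l y).val : ℤ) < F x then (1 : ℤ) else 0) κ x :=
        Finset.sum_congr rfl fun k _ ↦ by
          simp [Set.indicator_apply, wealth, h.iterate_mem hx, h.iterate_invariant hx]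
    _ = ∑ k ∈ Finset.range κ, if (k : ℤ) < F x then 1 else 0 :=
        h.birkhoffSum_level hx fun k ↦ if (k : ℤ) < F x then 1 else 0
    _ = max (F x) 0 := by rw [Finset.sum_boole, ← card_lt_eq_max (hFκ x)]

lemma IsTower.birkhoffSum_debt [NeZero κ] (h : IsTower σ M l F) (hMB : M ⊆ B)
    (hFκ : ∀ x, F x ≠ 0 → (F x).natAbs ∣ κ) {x : X} (hx : x ∈ M) :
    birkhoffSum σ ((debt B M l F).indicator 1) κ x = max (-F x) 0 := by
  classical
  have hdebt (k) : σ^[k] x ∈ debt B M l F ↔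
      F x < 0 ∧ κ / (F x).natAbs ∣ (l (σ^[k] x)).val + 1 := by
    simp [debt, hMB (h.iterate_mem hx k), h.iterate_mem hx, h.iterate_invariant hx]
  rcases le_or_gt 0 (F x) with hFx | hFx
  · simp [birkhoffSum, hdebt, hFx.not_gt, hFx]
  calc birkhoffSum σ ((debt B M l F).indicator 1) κ x
      = birkhoffSum σ (fun y ↦ if κ / (F x).natAbs ∣ (l y).val + 1 then (1 : ℤ) else 0) κ x :=
        Finset.sum_congr rfl fun k _ ↦ by simp [Set.indicator_apply, hdebt, hFx]
    _ = ∑ k ∈ Finset.range κ, if κ / (F x).natAbs ∣ k + 1 then (1 : ℤ) else 0 :=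
        h.birkhoffSum_level hx fun k ↦ if κ / (F x).natAbs ∣ k + 1 then 1 else 0
    _ = max (-F x) 0 := by
        rw [Finset.sum_boole, card_dvd_div (NeZero.ne κ) (hFκ x hFx.ne)]
        lia

lemma IsTower.iterate_mem_debt_iff [NeZero κ] (h : IsTower σ M l F) (hMB : M ⊆ B) {x : X}
    (hx : x ∈ M) (hFx : F x < 0) (hFκ : (F x).natAbs ∣ κ) (k : ℕ) :
    σ^[k] x ∈ debt B M l F ↔ κ / (F x).natAbs ∣ (l x).val + 1 + k := by
  have hval : (l x + k).val = ((l x).val + k) % κ := by simp [ZMod.val_add, ZMod.val_natCast]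
  have hmod : ((l x).val + k) % κ + 1 ≡ (l x).val + 1 + k [MOD κ] :=
    ((Nat.mod_modEq _ κ).add_right 1).trans (by rw [add_right_comm])
  simp only [debt, Set.mem_ofPred_eq, h.iterate_mem hx, h.iterate_invariant hx, hFx, hMB _,
    h.level_iterate hx, hval, true_and, true_imp_iff]
  exact hmod.dvd_iff (Nat.div_dvd_of_dvd hFκ)

lemma IsTower.exists_iterate_mem_debt [NeZero κ] (h : IsTower σ M l F) (hMB : M ⊆ B) {x : X}
    (hx : x ∈ M) (hFx : F x < 0) (hFκ : (F x).natAbs ∣ κ) : ∃ k, σ^[k] x ∈ debt B M l F := by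
  have hpos : 0 < κ / (F x).natAbs :=
    Nat.div_pos (Nat.le_of_dvd (NeZero.pos κ) hFκ) (Int.natAbs_pos.2 hFx.ne)
  refine ⟨(κ / (F x).natAbs - 1) * ((l x).val + 1),
    (h.iterate_mem_debt_iff hMB hx hFx hFκ _).2 ⟨(l x).val + 1, ?_⟩⟩
  rw [← one_add_mul, Nat.add_sub_cancel' (Nat.one_le_iff_ne_zero.2 hpos.ne')]

/-- The values `F x = -j` between two consecutive debts, which are `κ / j` steps apart, add up to
`-κ`. -/
lemma IsTower.birkhoffSum_returnTime_debt [NeZero κ] (h : IsTower σ M l F) (hMB : M ⊆ B) {x : X}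
    (hxM : x ∈ M) (hx : x ∈ debt B M l F) (hFκ : (F x).natAbs ∣ κ) :
    birkhoffSum σ F (returnTime σ ({y | 0 ≤ F y} ∪ debt B M l F) x) x = -κ := by
  have hFx := hx.2.1
  have hmem (k) : σ^[k] x ∈ {y | 0 ≤ F y} ∪ debt B M l F ↔ κ / (F x).natAbs ∣ k := by
    rw [Set.mem_union, h.iterate_mem_debt_iff hMB hxM hFx hFκ, Nat.dvd_add_right (hx.2.2 hxM)]
    simp [h.iterate_invariant hxM, hFx]
  have hreturn : returnTime σ ({y | 0 ≤ F y} ∪ debt B M l F) x = κ / (F x).natAbs :=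
    returnTime_eq (Nat.div_pos (Nat.le_of_dvd (NeZero.pos κ) hFκ) (Int.natAbs_pos.2 hFx.ne))
      ((hmem _).2 dvd_rfl) fun k hk₀ hk ↦ by
        rw [hmem]
        exact Nat.not_dvd_of_pos_of_lt hk₀ hk
  rw [hreturn, h.birkhoffSum_eq hxM]
  have hmul : ((κ / (F x).natAbs : ℕ) : ℤ) * |F x| = κ := by
    rw [← Int.natCast_natAbs]
    exact_mod_cast Nat.div_mul_cancel hFκ
  rw [abs_of_neg hFx] at hmul
  linarith

lemma IsTower.le_birkhoffSum_returnTime [NeZero κ] (h : IsTower σ M l F) (hMB : M ⊆ B)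
    (hFκ : ∀ x, F x ≠ 0 → (F x).natAbs ∣ κ) {x : X} (hx : x ∈ {y | 0 ≤ F y} ∪ debt B M l F) :
    (F ⊔ 0 - (debt B M l F).indicator fun _ ↦ (κ : ℤ)) x ≤
      birkhoffSum σ F (returnTime σ ({y | 0 ≤ F y} ∪ debt B M l F) x) x := by
  by_cases hxMD : x ∈ M ∩ debt B M l F
  · rw [h.birkhoffSum_returnTime_debt hMB hxMD.1 hxMD.2 (hFκ x hxMD.2.2.1.ne)]
    simp [hxMD.2, hxMD.2.2.1.le]
  have hσx : σ x ∈ {y | 0 ≤ F y} ∪ debt B M l F := by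
    by_cases hxM : x ∈ M
    · exact .inl ((hx.resolve_right fun hxD ↦ hxMD ⟨hxM, hxD⟩).trans_eq
        (h.invariant x hxM).symm)
    · rwa [h.supportedIn x hxM]
  rw [returnTime_eq one_pos hσx fun k hk₀ hk ↦ by lia, birkhoffSum_one]
  rcases hx with (hx : 0 ≤ F x) | hx
  · have hxD : x ∉ debt B M l F := fun hxD ↦ hx.not_gt hxD.2.1
    simp [hxD, hx]
  · simpa [hx, hx.2.1.le] using neg_le_of_abs_le (abs_le_of_natAbs_dvd (hFκ x))

lemma IsTower.le_birkhoffSum [NeZero κ] (h : IsTower σ M l F) (hMB : M ⊆ B)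
    (hFB : ∀ x ∉ B, F x = 0) (hFκ : ∀ x, F x ≠ 0 → (F x).natAbs ∣ κ) :
    F ≤ birkhoffSum σ ((wealth M l F).indicator 1 - (debt B M l F).indicator 1) κ +
      (B \ M).indicator fun _ ↦ 2 * (κ : ℤ) := by
  intro x
  have habs (x) : |F x| ≤ κ := abs_le_of_natAbs_dvd (hFκ x)
  by_cases hxM : x ∈ M
  · have hsub : birkhoffSum σ ((wealth M l F).indicator 1 - (debt B M l F).indicator 1) κ x =
        max (F x) 0 - max (-F x) 0 := by
      rw [← h.birkhoffSum_wealth (fun y ↦ (le_abs_self _).trans (habs y)) hxM,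
        ← h.birkhoffSum_debt hMB hFκ hxM]
      simp [birkhoffSum]
    simp only [Pi.add_apply, hsub, Set.indicator_of_notMem fun hx : x ∈ B \ M ↦ hx.2 hxM]
    lia
  have hfixed : Function.IsFixedPt σ x := h.supportedIn x hxM
  have hxW : x ∉ wealth M l F := fun hx ↦ hxM hx.1
  simp only [Pi.add_apply, hfixed.birkhoffSum_eq, Pi.sub_apply, Set.indicator_of_notMem hxW]
  by_cases hxB : x ∈ B
  · have hle := (le_abs_self _).trans (habs x)
    by_cases hxD : x ∈ debt B M l F <;> simp [hxB, hxM, hxD] <;> lia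
  · have hxD : x ∉ debt B M l F := fun hx ↦ hxB hx.1
    simp [hxB, hxD, hFB x hxB]

end Debt

section Integral

variable {X : Type*} [TopologicalSpace X] [CompactSpace X] [MeasurableSpace X] [BorelSpace X]
  {μ : ProbabilityMeasure X} {B M : Set X} {F : X → ℤ} {κ : ℕ} {l : X → ZMod κ} {σ : X ≃ₜ X}

lemma intIntegral_birkhoffSum {g : X ≃ₜ X} (hg : Preserves g μ) (hF : IsLocallyConstant F) (n : ℕ) :
    intIntegral μ (birkhoffSum g F n) = n * intIntegral μ F := by
  induction n with
  | zero => simp [intIntegral]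
  | succ n ih =>
    have hsucc : birkhoffSum g F (n + 1) = birkhoffSum g F n + F ∘ g^[n] :=
      funext (birkhoffSum_succ g F n)
    rw [hsucc, intIntegral_add (isLocallyConstant_birkhoffSum g.continuous hF n)
      (hF.comp_continuous (g.continuous.iterate n)), hg.intIntegral_comp_iterate, ih]
    push_cast
    ring

lemma IsTower.intIntegral_le [NeZero κ] (h : IsTower σ M l F)
    (hσ : Preserves σ μ) (hF : IsLocallyConstant F) (hB : IsClopen B) (hMB : M ⊆ B)
    (hFB : ∀ x ∉ B, F x = 0) (hFκ : ∀ x, F x ≠ 0 → (F x).natAbs ∣ κ) :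
    intIntegral μ F ≤
      κ * ((μ (wealth M l F) : ℝ) - μ (debt B M l F)) + 2 * κ * μ (B \ M) := by
  have hW := isClopen_wealth h.isClopen h.isLocallyConstant hF
  have hD := isClopen_debt hB h.isClopen h.isLocallyConstant hF
  have hW₁ : IsLocallyConstant ((wealth M l F).indicator (1 : X → ℤ)) :=
    isLocallyConstant_indicator hW (.const 1)
  have hD₁ : IsLocallyConstant ((debt B M l F).indicator (1 : X → ℤ)) :=
    isLocallyConstant_indicator hD (.const 1)
  have hWD := isLocallyConstant_sub hW₁ hD₁
  have hrest : IsLocallyConstant ((B \ M).indicator fun _ ↦ 2 * (κ : ℤ)) :=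
    isLocallyConstant_indicator (hB.diff h.isClopen) (.const (2 * (κ : ℤ)))
  have hle := intIntegral_mono (μ := μ) hF (isLocallyConstant_add
    (isLocallyConstant_birkhoffSum σ.continuous hWD κ) hrest) (h.le_birkhoffSum hMB hFB hFκ)
  rw [intIntegral_add (isLocallyConstant_birkhoffSum σ.continuous hWD κ) hrest,
    intIntegral_birkhoffSum hσ hWD, intIntegral_sub hW₁ hD₁,
    intIntegral_indicator_one μ hW.isOpen.measurableSet,
    intIntegral_indicator_one μ hD.isOpen.measurableSet,
    intIntegral_indicator_const μ (hB.diff h.isClopen).isOpen.measurableSet] at hle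
  exact_mod_cast hle

end Integral

section Solve

variable {X : Type*} [TopologicalSpace X] [CompactSpace X] [TopologicalSpace.MetrizableSpace X]
  [TotallyDisconnectedSpace X] [MeasurableSpace X] [BorelSpace X]
  {K : Set (ProbabilityMeasure X)} {A B C E M : Set X} {F : X → ℤ}
  {κ : ℕ} {l : X → ZMod κ} {σ : X ≃ₜ X}

lemma IsTower.exists_restrict (h : IsTower σ M l F) (hσ : PreservesAll K σ)
    (hF : IsLocallyConstant F) (s : Set ℤ) :
    ∃ σ', PreservesAll K σ' ∧ IsTower σ' (M ∩ F ⁻¹' s) l F := by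
  have hσ_iff (x) : σ x ∈ M ∩ F ⁻¹' s ↔ x ∈ M ∩ F ⁻¹' s := by
    simp only [Set.mem_inter_iff, h.supportedIn.apply_mem_iff]
    exact and_congr_right fun hx ↦ by simp [h.invariant x hx]
  have hclopen := h.isClopen.inter (isClopen_preimage hF s)
  obtain ⟨σ', hσ', hsupp, heq⟩ := hσ.exists_restrict hclopen hσ_iff
  exact ⟨σ', hσ', hclopen, h.isLocallyConstant, hsupp,
    fun x hx ↦ by rw [heq x hx, h.level_apply x hx.1],
    fun x hx ↦ by rw [heq x hx, h.invariant x hx.1]⟩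

lemma DynamicalSimplex.exists_exchange (hK : DynamicalSimplex K) (hC : IsClopen C)
    (hE : IsClopen E) (hCE : Disjoint C E) (h : ∀ μ ∈ K, μ C = μ E) :
    ∃ φ : X ≃ₜ X, PreservesAll K φ ∧ SupportedIn φ (C ∪ E) ∧ Set.MapsTo φ C E ∧
      Set.MapsTo φ E C := by
  have hCE' (x) (hx : x ∈ C) : x ∉ E := Set.disjoint_left.1 hCE hx
  have hmatched : ∀ i, ∀ μ ∈ K, μ ((C ∪ E) ∩ (· ∈ C) ⁻¹' {i}) = μ ((C ∪ E) ∩ (· ∈ E) ⁻¹' {i}) := by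
    intro i μ hμ
    by_cases hi : i
    · obtain rfl := eq_true hi
      convert h μ hμ using 2 <;> · ext x; simp +contextual
    · obtain rfl := eq_false hi
      convert (h μ hμ).symm using 2 <;>
      · ext x
        have := hCE' x
        simp only [Set.preimage_singleton_false, Set.mem_inter_iff, Set.mem_union,
          Set.mem_ofPred_eq]
        tauto
  obtain ⟨φ, hφ, hsupp, hφx⟩ := hK.homogeneousOn (isLocallyConstant_mem hC)
    (isLocallyConstant_mem hE) (hC.union hE) hmatched
  refine ⟨φ, hφ, hsupp, fun x hx ↦ (hφx x (.inl hx)).mpr hx, fun x hx ↦ ?_⟩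
  exact (hsupp.apply_mem_iff.2 (.inr hx)).resolve_right fun hφE ↦
    hCE' x ((hφx x (.inr hx)).mp hφE) hx

/-- Inducing on the complement of `E` lets each point of `C` pay the debt `w` of a point of
`E`. -/
lemma DynamicalSimplex.solvable_of_exchange (hK : DynamicalSimplex K) (hC : IsClopen C)
    (hE : IsClopen E) (hCA : C ⊆ A) (hAE : Disjoint A E) (h : ∀ μ ∈ K, μ C = μ E)
    (hF : IsLocallyConstant F) (hFE : ∀ x ∈ E, 0 ≤ F x) (w : ℤ)
    (hsolv : Solvable K A (F - C.indicator fun _ ↦ w)) :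
    Solvable K (A ∪ E) (F - E.indicator fun _ ↦ w) := by
  have hAE' (x) (hx : x ∈ A) : x ∉ E := Set.disjoint_left.1 hAE hx
  obtain ⟨φ, hφ, hsupp, hCE, hEC⟩ := hK.exists_exchange hC hE (hAE.mono_left hCA) h
  have hinter : (A ∪ E) ∩ Eᶜ = A := by
    rw [← Set.sdiff_eq, Set.union_sdiff_right, hAE.sdiff_eq_left]
  refine hK.solvable_of_induced (D := Eᶜ) (F₁ := F - C.indicator fun _ ↦ w) hφ
    (hsupp.mono (Set.union_subset_union_left E hCA)) hE.compl
    (Set.compl_subset_compl.2 Set.subset_union_right) (fun x ↦ ?_)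
    (isLocallyConstant_sub hF (isLocallyConstant_indicator hE (.const w))) (fun x hx ↦ ?_)
    (by rwa [hinter])
  · by_cases hx : x ∈ E
    · exact ⟨1, hAE' _ (hCA (hEC hx))⟩
    · exact ⟨0, hx⟩
  · by_cases hxC : x ∈ C
    · have hreturn : returnTime φ Eᶜ x = 2 := by
        refine returnTime_eq two_pos (hAE' _ (hCA (hEC (hCE hxC)))) fun k hk₀ hk ↦ ?_
        obtain rfl : k = 1 := by lia
        exact fun hφx ↦ hφx (hCE hxC)
      have hsum : birkhoffSum φ (F - E.indicator fun _ ↦ w) 2 x = F x + (F (φ x) - w) := by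
        simp [birkhoffSum_succ, hCE hxC, hAE' x (hCA hxC)]
      rw [hreturn, hsum, Pi.sub_apply, Set.indicator_of_mem hxC]
      linarith [hFE _ (hCE hxC)]
    · have hreturn : returnTime φ Eᶜ x = 1 :=
        returnTime_eq one_pos (by simpa [hsupp x (not_or_intro hxC hx)] using hx)
          fun k hk₀ hk ↦ by lia
      simp [hreturn, hxC, Set.indicator_of_notMem hx]

lemma IsTower.solvable_sub_wealth [NeZero κ] (hK : DynamicalSimplex K) (h : IsTower σ M l F)
    (hσ : PreservesAll K σ) (hF : IsLocallyConstant F) (hFκ : ∀ x, F x ≤ κ) :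
    Solvable K (M ∩ F ⁻¹' Set.Ioi 0) (F ⊔ 0 - (wealth M l F).indicator fun _ ↦ (κ : ℤ)) := by
  obtain ⟨σ', hσ', h'⟩ := h.exists_restrict hσ hF (Set.Ioi 0)
  have hwealth : wealth M l F = wealth (M ∩ F ⁻¹' Set.Ioi 0) l F := by
    ext x
    simp only [wealth, Set.mem_ofPred_eq, Set.mem_inter_iff, Set.mem_preimage, Set.mem_Ioi]
    lia
  refine h'.solvable hK hσ' (isLocallyConstant_sub (hF.comp (· ⊔ 0)) <|
    isLocallyConstant_indicator (isClopen_wealth h.isClopen h.isLocallyConstant hF) (.const _))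
    (fun x hx ↦ ?_) fun x hx ↦ Eq.le ?_
  · have hxW : x ∉ wealth M l F := fun hxW ↦ hx (hwealth ▸ hxW).1
    simp [hxW]
  · calc (0 : ℤ) = κ * max (F x) 0 - κ * max (F x) 0 := (sub_self _).symm
      _ = κ * max (F x) 0 - κ * birkhoffSum σ' ((wealth M l F).indicator 1) κ x := by
          rw [hwealth, h'.birkhoffSum_wealth hFκ hx]
      _ = birkhoffSum σ' (F ⊔ 0 - (wealth M l F).indicator fun _ ↦ (κ : ℤ)) κ x := by
          simp only [birkhoffSum, Finset.mul_sum, Pi.sub_apply, Pi.sup_apply,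
            h'.iterate_invariant hx, Finset.sum_sub_distrib, Finset.sum_const, Finset.card_range,
            nsmul_eq_mul, Pi.zero_apply]
          congr! 2 with k
          by_cases hk : σ'^[k] x ∈ wealth M l F <;> simp [hk]

/-- The debt of each orbit of the tower is paid by `C ⊆ wealth M l F`. -/
lemma IsTower.solvable_of_subset_wealth [NeZero κ] (hK : DynamicalSimplex K)
    (h : IsTower σ M l F) (hσ : PreservesAll K σ) (hF : IsLocallyConstant F) (hB : IsClopen B)
    (hMB : M ⊆ B) (hFB : ∀ x ∉ B, 0 ≤ F x) (hFκ : ∀ x, F x ≠ 0 → (F x).natAbs ∣ κ)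
    (hC : IsClopen C) (hCW : C ⊆ wealth M l F) (hCD : ∀ μ ∈ K, μ C = μ (debt B M l F)) :
    Solvable K B F := by
  have hD := isClopen_debt hB h.isClopen h.isLocallyConstant hF
  have hsolv : Solvable K (M ∩ F ⁻¹' Set.Ioi 0 ∪ debt B M l F)
      (F ⊔ 0 - (debt B M l F).indicator fun _ ↦ (κ : ℤ)) := by
    refine hK.solvable_of_exchange (A := M ∩ F ⁻¹' Set.Ioi 0) hC hD
      (fun x hx ↦ ⟨(hCW hx).1, ?_⟩)
      (Set.disjoint_left.2 fun x hx hxD ↦ hx.2.not_gt hxD.2.1) hCD (hF.comp (· ⊔ 0))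
      (fun x _ ↦ by simp) κ ((h.solvable_sub_wealth hK hσ hF fun x ↦
        (le_abs_self _).trans (abs_le_of_natAbs_dvd (hFκ x))).mono le_rfl ?_)
    · exact (Int.natCast_nonneg _).trans_lt (hCW hx).2
    · exact sub_le_sub_left (Set.indicator_le_indicator_of_subset hCW fun _ ↦ by simp) _
  refine hK.solvable_of_induced (D := {x | 0 ≤ F x} ∪ debt B M l F) hσ (h.supportedIn.mono hMB)
    ((isClopen_preimage hF (Set.Ici 0)).union hD) (fun x hx ↦ .inl (hFB x hx)) (fun x ↦ ?_) hF
    (fun x hx ↦ h.le_birkhoffSum_returnTime hMB hFκ hx) (hsolv.mono ?_ le_rfl)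
  · by_cases hFx : 0 ≤ F x
    · exact ⟨0, .inl hFx⟩
    by_cases hxM : x ∈ M
    · obtain ⟨k, hk⟩ := h.exists_iterate_mem_debt hMB hxM (not_le.1 hFx)
        (hFκ x (not_le.1 hFx).ne)
      exact ⟨k, .inr hk⟩
    · exact ⟨0, .inr ⟨by_contra fun hxB ↦ hFx (hFB x hxB), not_le.1 hFx, fun hx ↦ absurd hx hxM⟩⟩
  · exact Set.union_subset (fun x hx ↦ ⟨hMB hx.1, .inl (show 0 < F x from hx.2).le⟩)
      fun x hx ↦ ⟨hx.1, .inr hx⟩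

theorem DynamicalSimplex.solvable_of_intIntegral_pos (hK : DynamicalSimplex K)
    (hB : IsClopen B) (hF : IsLocallyConstant F) (hFB : ∀ x ∉ B, F x = 0)
    (hpos : ∀ μ ∈ K, 0 < intIntegral μ F) : Solvable K B F := by
  obtain ⟨q, hq⟩ := exists_abs_le hF
  obtain ⟨δ, hδ, hδF⟩ := exists_pos_forall_le hK.isCompact (continuous_intIntegral hF) hpos
  have hFκ (x) (hFx : F x ≠ 0) : (F x).natAbs ∣ q.factorial :=
    Nat.dvd_factorial (Int.natAbs_pos.2 hFx)
      (Int.ofNat_le.1 ((Int.natCast_natAbs _).trans_le (hq x)))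
  have : NeZero q.factorial := ⟨q.factorial_ne_zero⟩
  obtain ⟨σ, M, l, hσ, h, hMB, hε⟩ := hK.exists_isTower (κ := q.factorial) hB hF
    (ε := δ / (2 * q.factorial)) (by positivity)
  have hW := isClopen_wealth h.isClopen h.isLocallyConstant hF
  have hD := isClopen_debt hB h.isClopen h.isLocallyConstant hF
  have hlt : ∀ μ ∈ K, μ (debt B M l F) < μ (wealth M l F) := fun μ hμ ↦ by
    have hle := (hδF μ hμ).trans (h.intIntegral_le (hσ μ hμ) hF hB hMB hFB hFκ)
    have hsmall := (lt_div_iff₀' (by positivity)).1 (hε μ hμ)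
    have hdiff : (0 : ℝ) < μ (wealth M l F) - μ (debt B M l F) :=
      pos_of_mul_pos_right (by linarith) (Nat.cast_nonneg q.factorial)
    exact_mod_cast sub_pos.1 hdiff
  obtain ⟨C, hC, hCW, hCD⟩ := hK.good _ _ hD hW hlt
  exact h.solvable_of_subset_wealth hK hσ hF hB hMB (fun x hx ↦ (hFB x hx).ge) hFκ hC hCW hCD

end Solve

/-! ### Modifying a homeomorphism inside a clopen set -/

section Decides

variable {X : Type*} [TopologicalSpace X] {B C : Set X}

/-- `B` lies on one side of `C`. -/
def Decides (B C : Set X) : Prop :=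
  ∀ x ∈ B, ∀ y ∈ B, (x ∈ C ↔ y ∈ C)

lemma exists_isClopen_decides [CompactSpace X] [T2Space X] [TotallyDisconnectedSpace X]
    (g : X ≃ₜ X) (hB : IsClopen B) (hC : IsClopen C) {x : X} {k : ℕ} (hx : x ∈ B)
    (hk : g^[k] x ∈ B) (hkx : g^[k] x ≠ x) :
    ∃ V ⊆ B, x ∈ V ∧ IsClopen V ∧ (∀ y ∈ V, g^[k] y ∈ B \ V) ∧ Decides V C ∧
      Decides (g ⁻¹' V) C := by
  obtain ⟨N, hN, hxN, hNk⟩ := compact_exists_isClopen_in_isOpen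
    (isOpen_compl_singleton (x := g^[k] x)) (Set.mem_compl_singleton_iff.2 hkx.symm)
  have hside (c : Prop) : IsClopen {y | y ∈ C ↔ c} :=
    isClopen_preimage (isLocallyConstant_mem hC) {p | p ↔ c}
  refine ⟨B ∩ (N ∩ (g^[k] ⁻¹' (B \ N) ∩
      ({y | y ∈ C ↔ x ∈ C} ∩ g.symm ⁻¹' {y | y ∈ C ↔ g.symm x ∈ C}))),
    Set.inter_subset_left, ⟨hx, hxN, ⟨hk, fun h ↦ hNk h rfl⟩, Iff.rfl, Iff.rfl⟩,
    hB.inter (hN.inter (((hB.diff hN).preimage (g.continuous.iterate k)).inter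
      ((hside _).inter ((hside _).preimage g.symm.continuous)))), ?_, ?_, ?_⟩
  · exact fun y hy ↦ ⟨hy.2.2.1.1, fun h ↦ hy.2.2.1.2 h.2.1⟩
  · exact fun y hy z hz ↦ hy.2.2.2.1.trans hz.2.2.2.1.symm
  · have hsymm (y) (hy : g y ∈ g.symm ⁻¹' {y | y ∈ C ↔ g.symm x ∈ C}) :
        y ∈ C ↔ g.symm x ∈ C := by simpa using hy
    exact fun y hy z hz ↦ (hsymm y hy.2.2.2.2).trans (hsymm z hz.2.2.2.2).symm

end Decides

section Transfer

variable {X : Type*} [TopologicalSpace X] {D U : Set X} {F h : X → ℤ}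

/-- Along an orbit avoiding `U` the transfer function would increase indefinitely. -/
lemma orbitsMeet_of_neg [CompactSpace X] {g : X → X} (hh : IsLocallyConstant h)
    (hnonneg : ∀ x, 0 ≤ F x + h (g x) - h x) (hF : ∀ x ∉ U, F x < 0) : OrbitsMeet g U := by
  intro x
  by_contra! havoid
  have hgrowth (n : ℕ) : h x + n ≤ h (g^[n] x) := by
    induction n with
    | zero => simp
    | succ n ih =>
      have hgx := hnonneg (g^[n] x)
      have hneg := hF _ (havoid n)
      rw [Function.iterate_succ_apply']
      push_cast
      lia
  obtain ⟨q, hq⟩ := exists_abs_le hh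
  have hlarge := hgrowth (2 * q + 1)
  have hx := neg_le_of_abs_le (hq x)
  have hgx := le_of_abs_le (hq (g^[2 * q + 1] x))
  push_cast at hlarge
  lia

lemma IsTransfer.trans {g γ : X ≃ₜ X} (hT : IsTransfer g F h D) (hγ : SupportedIn γ D)
    (hU : IsClopen U) (hUD : U ⊆ D) (hmeet : OrbitsMeet (g.trans γ) U) :
    IsTransfer (g.trans γ) F h U where
  isLocallyConstant := hT.isLocallyConstant
  isClopen := hU
  eq_zero x hx := hT.eq_zero x (hUD hx)
  nonneg x := by
    have hγx : h (γ (g x)) = h (g x) := by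
      by_cases hx : g x ∈ D
      · rw [hT.eq_zero _ hx, hT.eq_zero _ (hγ.apply_mem_iff.2 hx)]
      · rw [hγ _ hx]
    simpa [hγx] using hT.nonneg x
  orbitsMeet := hmeet

end Transfer

section Modify

variable {X : Type*} [TopologicalSpace X] [CompactSpace X] [TopologicalSpace.MetrizableSpace X]
  [MeasurableSpace X] [BorelSpace X]
  {K : Set (ProbabilityMeasure X)} {B C U : Set X} {f : X → ℤ} {g : X ≃ₜ X}

lemma DynamicalSimplex.exists_intIntegral_indicator_sub_one_pos (hK : DynamicalSimplex K)
    (hU : IsClopen U) (hne : U.Nonempty) :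
    ∃ N : ℤ, ∀ μ ∈ K, 0 < intIntegral μ (U.indicator (fun _ ↦ N) - 1) := by
  obtain ⟨δ, hδ, hδU⟩ := exists_pos_forall_le hK.isCompact (continuous_apply_isClopen hU)
    fun μ hμ ↦ hK.pos hμ hU.isOpen hne
  obtain ⟨N, hN⟩ := exists_nat_gt (1 / δ)
  refine ⟨N, fun μ hμ ↦ ?_⟩
  have hU₁ : IsLocallyConstant (U.indicator fun _ ↦ (N : ℤ)) :=
    isLocallyConstant_indicator hU (.const _)
  have h₁ : IsLocallyConstant (1 : X → ℤ) := .const 1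
  rw [intIntegral_sub hU₁ h₁, intIntegral_indicator_const μ hU.isOpen.measurableSet, sub_pos]
  calc intIntegral μ 1 = 1 := by simp [intIntegral]
    _ < N * δ := (div_lt_iff₀ hδ).1 hN
    _ ≤ ((N : ℤ) : ℝ) * μ U := by
      rw [Int.cast_natCast]
      exact mul_le_mul_of_nonneg_left (hδU μ hμ) N.cast_nonneg

variable [TotallyDisconnectedSpace X]

theorem DynamicalSimplex.exists_isTransfer (hK : DynamicalSimplex K) (hg : PreservesAll K g)
    (hB : IsClopen B) (hgB : OrbitsMeet g B) (hf : IsLocallyConstant f)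
    (hpos : ∀ μ ∈ K, 0 < intIntegral μ f) :
    ∃ γ : X ≃ₜ X, PreservesAll K γ ∧ SupportedIn γ B ∧
      ∃ h, ∃ D ⊆ B, IsTransfer (g.trans γ) f h D := by
  let u := entrySum g B f
  have hu : IsLocallyConstant u := hgB.isLocallyConstant_entrySum g.continuous hB hf
  have hug : IsLocallyConstant (u ∘ g) := hu.comp_continuous g.continuous
  have hfu := isLocallyConstant_add hf hug
  have hvanish (x) (hx : x ∉ B) : (f + u ∘ g - u) x = 0 := by
    simp [u, hgB.entrySum_of_notMem f hx]
  have hpos' (μ) (hμ : μ ∈ K) : 0 < intIntegral μ (f + u ∘ g - u) := by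
    rw [intIntegral_sub hfu hu, intIntegral_add hf hug, (hg μ hμ).intIntegral_comp,
      add_sub_cancel_right]
    exact hpos μ hμ
  have hsolv := hK.solvable_of_intIntegral_pos hB (isLocallyConstant_sub hfu hu) hvanish hpos'
  obtain ⟨γ, hγ, hγB, h, E, -, hT⟩ := hK.exists_isTransfer_trans hg (B := Set.univ)
    (fun x hx ↦ absurd trivial hx) hB (by simp) hgB hf (F₁ := f + u ∘ g - u)
    (fun x hx ↦ by simp [birkhoffSum_returnTime, u, entrySum_of_mem f hx])
    (by rwa [Set.univ_inter])
  exact ⟨γ, hγ, Set.univ_inter B ▸ hγB, h, E ∩ B, Set.inter_subset_right, hT⟩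

lemma DynamicalSimplex.exists_orbitsMeet_trans (hK : DynamicalSimplex K) (hg : PreservesAll K g)
    (hB : IsClopen B) (hgB : OrbitsMeet g B) (hU : IsClopen U) (hne : U.Nonempty) :
    ∃ γ : X ≃ₜ X, PreservesAll K γ ∧ SupportedIn γ B ∧ OrbitsMeet (g.trans γ) U := by
  obtain ⟨N, hN⟩ := hK.exists_intIntegral_indicator_sub_one_pos hU hne
  obtain ⟨γ, hγ, hγB, h, D, -, hT⟩ := hK.exists_isTransfer hg hB hgB
    (isLocallyConstant_sub (isLocallyConstant_indicator hU (.const N)) (.const 1)) hN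
  exact ⟨γ, hγ, hγB, orbitsMeet_of_neg hT.isLocallyConstant hT.nonneg fun x hx ↦ by simp [hx]⟩

lemma DynamicalSimplex.exists_apply_ne (hK : DynamicalSimplex K) (hB : IsClopen B)
    (hne : B.Nonempty) :
    ∃ σ : X ≃ₜ X, PreservesAll K σ ∧ SupportedIn σ B ∧ ∃ x ∈ B, σ x ≠ x := by
  obtain ⟨μ, hμ⟩ := hK.nonempty
  obtain ⟨σ, M, l, hσ, h, hMB, hε⟩ := hK.exists_isTower (κ := 2) hB (.const (0 : ℤ))
    (hK.pos hμ hB.isOpen hne)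
  have hM : M.Nonempty := by
    by_contra hM
    simpa [Set.not_nonempty_iff_eq_empty.1 hM] using hε μ hμ
  obtain ⟨x, hx⟩ := hM
  refine ⟨σ, hσ, h.supportedIn.mono hMB, x, hMB hx, fun hσx ↦ ?_⟩
  have hlevel := h.level_apply x hx
  rw [hσx] at hlevel
  exact one_ne_zero (left_eq_add.1 hlevel)

lemma DynamicalSimplex.exists_iterate_ne (hK : DynamicalSimplex K) (hB : IsClopen B)
    (hne : B.Nonempty) (hgB : OrbitsMeet g B) :
    ∃ γ : X ≃ₜ X, PreservesAll K γ ∧ SupportedIn γ B ∧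
      ∃ x ∈ B, ∃ k, (g.trans γ)^[k] x ∈ B ∧ (g.trans γ)^[k] x ≠ x := by
  obtain ⟨σ, hσ, hσB, x, hx, hσx⟩ := hK.exists_apply_ne hB hne
  by_cases hreturn : g^[returnTime g B x] x = x
  · refine ⟨σ, hσ, hσB, x, hx, returnTime g B x, ?_⟩
    rw [hσB.iterate_returnTime_trans, hreturn, hσB.apply_mem_iff]
    exact ⟨hx, hσx⟩
  · exact ⟨.refl X, .refl, fun _ _ ↦ rfl, x, hx, returnTime g B x,
      hgB.iterate_returnTime_mem x, hreturn⟩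

/-- The second modification is supported in `B \ V`, so that it changes neither `V` nor its
preimage. -/
lemma DynamicalSimplex.exists_trans_decides (hK : DynamicalSimplex K) (hg : PreservesAll K g)
    (hB : IsClopen B) (hne : B.Nonempty) (hgB : OrbitsMeet g B) (hC : IsClopen C) :
    ∃ γ : X ≃ₜ X, PreservesAll K γ ∧ SupportedIn γ B ∧ ∃ V ⊆ B, IsClopen V ∧
      OrbitsMeet (g.trans γ) V ∧ Decides V C ∧ Decides (g.trans γ ⁻¹' V) C := by
  obtain ⟨γ₁, hγ₁, hγ₁B, x, hx, k, hk, hkx⟩ := hK.exists_iterate_ne hB hne hgB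
  obtain ⟨V, hVB, hxV, hV, hVk, hVC, hVC'⟩ := exists_isClopen_decides _ hB hC hx hk hkx
  have hmeet : OrbitsMeet (g.trans γ₁) (B \ V) := fun y ↦ by
    obtain ⟨j, hj⟩ := hγ₁B.orbitsMeet_trans hgB y
    by_cases hjV : (g.trans γ₁)^[j] y ∈ V
    · exact ⟨k + j, by rw [Function.iterate_add_apply]; exact hVk _ hjV⟩
    · exact ⟨j, hj, hjV⟩
  obtain ⟨γ₂, hγ₂, hγ₂B, hmeetV⟩ :=
    hK.exists_orbitsMeet_trans (hg.trans hγ₁) (hB.diff hV) hmeet hV ⟨x, hxV⟩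
  have hγ₂V (y) (hy : γ₂ y ∈ V) : y ∈ V := by
    have hyV : y ∉ B \ V := fun h ↦ (hγ₂B.apply_mem_iff.2 h).2 hy
    rwa [hγ₂B y hyV] at hy
  exact ⟨γ₁.trans γ₂, hγ₁.trans hγ₂, hγ₁B.trans (hγ₂B.mono Set.sdiff_subset), V, hVB, hV, hmeetV,
    hVC, fun y hy z hz ↦ hVC' y (hγ₂V _ hy) z (hγ₂V _ hz)⟩

theorem DynamicalSimplex.exists_isTransfer_decides [Nonempty X] (hK : DynamicalSimplex K)
    (hg : PreservesAll K g) (hB : IsClopen B) (hgB : OrbitsMeet g B) (hf : IsLocallyConstant f)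
    (hpos : ∀ μ ∈ K, 0 < intIntegral μ f) (hC : IsClopen C) :
    ∃ γ : X ≃ₜ X, PreservesAll K γ ∧ SupportedIn γ B ∧ ∃ h, ∃ V ⊆ B,
      IsTransfer (g.trans γ) f h V ∧ Decides V C ∧ Decides (g.trans γ ⁻¹' V) C := by
  obtain ⟨γ₁, hγ₁, hγ₁B, h, D, hDB, hT⟩ := hK.exists_isTransfer hg hB hgB hf hpos
  obtain ⟨k, hk⟩ := hT.orbitsMeet (Classical.arbitrary X)
  obtain ⟨γ₂, hγ₂, hγ₂D, V, hVD, hV, hmeet, hVC, hVC'⟩ :=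
    hK.exists_trans_decides (hg.trans hγ₁) hT.isClopen ⟨_, hk⟩ hT.orbitsMeet hC
  exact ⟨γ₁.trans γ₂, hγ₁.trans hγ₂, hγ₁B.trans (hγ₂D.mono hDB), h, V, hVD.trans hDB,
    hT.trans hγ₂D hV hVD hmeet, hVC, hVC'⟩

end Modify

/-! ### Limits of sequences of homeomorphisms -/

section Converges

variable {X : Type*} [TopologicalSpace X]

/-- Convergence of maps tested on clopen sets. On a compact totally disconnected space this is
uniform convergence. -/
def ConvergesOnClopens (g : ℕ → X → X) (φ : X → X) : Prop :=
  ∀ A, IsClopen A → ∀ᶠ n in atTop, g n ⁻¹' A = φ ⁻¹' A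

variable {g g' : ℕ → X → X} {φ ψ : X → X}

lemma exists_convergesOnClopens [CompactSpace X]
    (h : ∀ A, IsClopen A → ∃ A', ∀ᶠ n in atTop, g n ⁻¹' A = A') :
    ∃ φ, ConvergesOnClopens g φ := by
  choose φ hφ using fun x ↦ exists_clusterPt_of_compactSpace (map (g · x) atTop)
  have hmem {A A' : Set X} (hA : IsClopen A) (hA' : ∀ᶠ n in atTop, g n ⁻¹' A = A') :
      φ ⁻¹' A ⊆ A' := fun x hx ↦ by
    obtain ⟨n, hn, rfl⟩ := ((mapClusterPt_iff_frequently.1 (hφ x) A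
      (hA.isOpen.mem_nhds hx)).and_eventually hA').exists
    exact hn
  refine ⟨φ, fun A hA ↦ ?_⟩
  obtain ⟨A', hA'⟩ := h A hA
  have hAA' : φ ⁻¹' A = A' :=
    (hmem hA hA').antisymm (Set.compl_subset_compl.1 (hmem hA.compl (hA'.mono fun n hn ↦ by
      rw [Set.preimage_compl, hn])))
  rwa [hAA']

namespace ConvergesOnClopens

lemma continuous [CompactSpace X] [T2Space X] [TotallyDisconnectedSpace X]
    (h : ConvergesOnClopens g φ) (hg : ∀ n, Continuous (g n)) : Continuous φ := by
  rw [isTopologicalBasis_isClopen.continuous_iff]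
  intro A hA
  obtain ⟨n, hn⟩ := (h A hA).exists
  exact hn ▸ hA.isOpen.preimage (hg n)

lemma comp (h : ConvergesOnClopens g φ) (hφ : Continuous φ) (h' : ConvergesOnClopens g' ψ) :
    ConvergesOnClopens (fun n ↦ g n ∘ g' n) (φ ∘ ψ) := by
  intro A hA
  filter_upwards [h A hA, h' _ (hA.preimage hφ)] with n hn hn'
  rw [Set.preimage_comp, hn, hn', Set.preimage_comp]

lemma eq_id_of_id [TotallySeparatedSpace X] (h : ConvergesOnClopens (fun _ ↦ id) φ) :
    φ = id := by
  funext x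
  by_contra hne
  obtain ⟨A, hA, hxA, hφA⟩ := exists_isClopen_of_totally_separated (Ne.symm hne)
  obtain ⟨_, hn⟩ := (h A hA).exists
  exact hφA (hn.subset hxA)

lemma eventually_apply_eq {ι : Type*} {h : X → ι} (hg : ConvergesOnClopens g φ)
    (hh : IsLocallyConstant h) (x : X) : ∀ᶠ n in atTop, h (g n x) = h (φ x) :=
  (hg _ (isClopen_preimage hh {h (φ x)})).mono fun _ hn ↦ hn.superset rfl

end ConvergesOnClopens

lemma exists_homeomorph_convergesOnClopens [CompactSpace X] [T2Space X]
    [TotallyDisconnectedSpace X] {g : ℕ → X ≃ₜ X}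
    (h : ∃ φ, ConvergesOnClopens (fun n ↦ g n) φ)
    (h' : ∃ ψ, ConvergesOnClopens (fun n ↦ (g n).symm) ψ) :
    ∃ φ : X ≃ₜ X, ConvergesOnClopens (fun n ↦ g n) φ := by
  obtain ⟨φ, hφ⟩ := h
  obtain ⟨ψ, hψ⟩ := h'
  have hφc := hφ.continuous fun n ↦ (g n).continuous
  have hψc := hψ.continuous fun n ↦ (g n).symm.continuous
  have hψφ : ψ ∘ φ = id :=
    ConvergesOnClopens.eq_id_of_id <| by simpa using hψ.comp hψc hφ
  have hφψ : φ ∘ ψ = id :=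
    ConvergesOnClopens.eq_id_of_id <| by simpa using hφ.comp hφc hψ
  exact ⟨⟨⟨φ, ψ, congrFun hψφ, congrFun hφψ⟩, hφc, hψc⟩, hφ⟩

lemma ConvergesOnClopens.preserves [CompactSpace X] [T2Space X] [SecondCountableTopology X]
    [TotallyDisconnectedSpace X] [MeasurableSpace X] [BorelSpace X] {μ : ProbabilityMeasure X}
    {g : ℕ → X ≃ₜ X} {φ : X ≃ₜ X} (h : ConvergesOnClopens (fun n ↦ g n) φ)
    (hg : ∀ n, Preserves (g n) μ) : Preserves φ μ := by
  refine preserves_of_forall_isClopen fun A hA ↦ ?_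
  obtain ⟨n, hn⟩ := (h A hA).exists
  rw [← hn, (hg n).measure_preimage hA.isOpen.measurableSet]

end Converges

section Modification

variable {X : Type*}

/-- Each map of the sequence is obtained from the previous one by modifying it, after the fact,
inside the set `B n`, and these sets decrease. -/
structure IsModificationSeq (g : ℕ → X → X) (B : ℕ → Set X) : Prop where
  antitone : Antitone B
  mem_iff (n : ℕ) (x : X) : g (n + 1) x ∈ B n ↔ g n x ∈ B n
  eq_of_notMem (n : ℕ) (x : X) : g n x ∉ B n → g (n + 1) x = g n x

lemma IsModificationSeq.apply_eq {α : Type*} {g : ℕ → X → X} {B : ℕ → Set X}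
    (h : IsModificationSeq g B) {φ : X → α} {n m : ℕ}
    (hφ : ∀ x ∈ B n, ∀ y ∈ B n, φ x = φ y) (hnm : n ≤ m) (x : X) : φ (g m x) = φ (g n x) := by
  induction m, hnm using Nat.le_induction with
  | base => rfl
  | succ m hnm ih =>
    rw [← ih]
    by_cases hx : g m x ∈ B m
    · exact hφ _ (h.antitone hnm ((h.mem_iff m x).2 hx)) _ (h.antitone hnm hx)
    · rw [h.eq_of_notMem m x hx]

variable [TopologicalSpace X] {g : ℕ → X ≃ₜ X} {B : ℕ → Set X}

lemma IsModificationSeq.symm (h : IsModificationSeq (fun n ↦ g n) B) :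
    IsModificationSeq (fun n ↦ (g n).symm) (fun n ↦ g n ⁻¹' B n) where
  antitone := antitone_nat_of_succ_le fun n x hx ↦
    (h.mem_iff n x).1 (h.antitone n.le_succ hx)
  mem_iff n x := by
    have := h.mem_iff n ((g (n + 1)).symm x)
    simpa using this.symm
  eq_of_notMem n x hx := by
    have := h.eq_of_notMem n ((g n).symm x) hx
    rw [Homeomorph.symm_apply_eq, this, Homeomorph.apply_symm_apply]

lemma IsModificationSeq.exists_convergesOnClopens [CompactSpace X] {g : ℕ → X → X}
    (h : IsModificationSeq g B) (hB : ∀ A, IsClopen A → ∃ n, Decides (B n) A) :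
    ∃ φ, ConvergesOnClopens g φ :=
  DynSimplex.exists_convergesOnClopens fun A hA ↦ by
    obtain ⟨n, hn⟩ := hB A hA
    refine ⟨g n ⁻¹' A, (eventually_ge_atTop n).mono fun m hm ↦ Set.ext fun x ↦ ?_⟩
    exact iff_of_eq (h.apply_eq (φ := (· ∈ A)) (fun y hy z hz ↦ propext (hn y hy z hz)) hm x)

end Modification

section Limit

variable {X : Type*} [TopologicalSpace X] [CompactSpace X] [TopologicalSpace.MetrizableSpace X]

instance : Countable C(X, ℤ) := by
  obtain ⟨s, hs, hdense⟩ := TopologicalSpace.exists_countable_dense C(X, ℤ)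
  have hsuniv : s = Set.univ := Set.eq_univ_of_forall fun f ↦ by
    obtain ⟨f', hf', hdist⟩ := hdense.exists_dist_lt f one_pos
    have hff' : f = f' := ContinuousMap.ext fun x ↦ by
      by_contra hne
      exact ((ContinuousMap.dist_apply_le_dist x).trans_lt hdist).not_ge
        (Int.pairwise_one_le_dist hne)
    exact hff' ▸ hf'
  exact Set.countable_univ_iff.1 (hsuniv ▸ hs)

lemma countable_setOf_isLocallyConstant : {f : X → ℤ | IsLocallyConstant f}.Countable :=
  (Set.countable_range fun f : C(X, ℤ) ↦ (f : X → ℤ)).mono fun f (hf : IsLocallyConstant f) ↦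
    Set.mem_range_self (⟨f, hf.continuous⟩ : C(X, ℤ))

variable [TotallyDisconnectedSpace X] [MeasurableSpace X] [BorelSpace X] [Nonempty X]
  {K : Set (ProbabilityMeasure X)}

lemma DynamicalSimplex.exists_isModificationSeq (hK : DynamicalSimplex K) {F : ℕ → X → ℤ}
    (hF : ∀ n, IsLocallyConstant (F n)) (hpos : ∀ n, ∀ μ ∈ K, 0 < intIntegral μ (F n))
    {C : ℕ → Set X} (hC : ∀ n, IsClopen (C n)) :
    ∃ (g : ℕ → X ≃ₜ X) (B : ℕ → Set X), (∀ n, PreservesAll K (g n)) ∧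
      IsModificationSeq (fun n ↦ g n) B ∧ ∀ n, (∃ h, IsTransfer (g (n + 1)) (F n) h (B (n + 1))) ∧
        Decides (B (n + 1)) (C n) ∧ Decides (g (n + 1) ⁻¹' B (n + 1)) (C n) := by
  let State := {s : (X ≃ₜ X) × Set X // PreservesAll K s.1 ∧ IsClopen s.2 ∧ OrbitsMeet s.1 s.2}
  let Step (n : ℕ) (s t : State) : Prop :=
    (∃ γ : X ≃ₜ X, SupportedIn γ s.1.2 ∧ t.1.1 = s.1.1.trans γ) ∧ t.1.2 ⊆ s.1.2 ∧
      (∃ h, IsTransfer t.1.1 (F n) h t.1.2) ∧ Decides t.1.2 (C n) ∧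
      Decides (t.1.1 ⁻¹' t.1.2) (C n)
  have hstep (n : ℕ) (s : State) : ∃ t, Step n s t := by
    obtain ⟨⟨g, B⟩, hg, hB, hgB⟩ := s
    obtain ⟨γ, hγ, hγB, h, V, hVB, hT, hV, hV'⟩ :=
      hK.exists_isTransfer_decides hg hB hgB (hF n) (hpos n) (hC n)
    exact ⟨⟨⟨g.trans γ, V⟩, hg.trans hγ, hT.isClopen, hT.orbitsMeet⟩, ⟨γ, hγB, rfl⟩, hVB,
      ⟨h, hT⟩, hV, hV'⟩
  obtain ⟨s, -, hs⟩ := exists_seq hstep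
    ⟨⟨Homeomorph.refl X, Set.univ⟩, PreservesAll.refl, isClopen_univ, fun _ ↦ ⟨0, trivial⟩⟩
  refine ⟨fun n ↦ (s n).1.1, fun n ↦ (s n).1.2, fun n ↦ (s n).2.1,
    ⟨antitone_nat_of_succ_le fun n ↦ (hs n).2.1, fun n x ↦ ?_, fun n x hx ↦ ?_⟩,
    fun n ↦ (hs n).2.2⟩ <;>
  obtain ⟨γ, hγ, heq⟩ := (hs n).1
  · simp only [heq, Homeomorph.trans_apply, hγ.apply_mem_iff]
  · simp only [heq, Homeomorph.trans_apply, hγ _ hx]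

theorem DynamicalSimplex.exists_forall_nonneg (hK : DynamicalSimplex K) :
    ∃ g : X ≃ₜ X, PreservesAll K g ∧ ∀ f : X → ℤ, IsLocallyConstant f →
      (∀ μ ∈ K, 0 < intIntegral μ f) →
        ∃ h : X → ℤ, IsLocallyConstant h ∧ ∀ x, 0 ≤ f x + h (g x) - h x := by
  obtain ⟨C, hC⟩ := exists_surjective_nat (TopologicalSpace.Clopens X)
  let P := {f : X → ℤ | IsLocallyConstant f ∧ ∀ μ ∈ K, 0 < intIntegral μ f}
  have hPne : P.Nonempty := ⟨1, .const 1, fun μ _ ↦ by simp [intIntegral]⟩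
  obtain ⟨F, hF⟩ := (countable_setOf_isLocallyConstant.mono fun f (hf : f ∈ P) ↦
    hf.1).exists_eq_range hPne
  have hFP (n : ℕ) : F n ∈ P := hF ▸ Set.mem_range_self n
  obtain ⟨g, B, hg, hgB, hstep⟩ := hK.exists_isModificationSeq (fun n ↦ (hFP n).1)
    (fun n ↦ (hFP n).2) fun n ↦ (C n).isClopen
  have hdec (A : Set X) (hA : IsClopen A) :
      ∃ n, Decides (B n) A ∧ Decides (g n ⁻¹' B n) A := by
    obtain ⟨n, hn⟩ := hC ⟨A, hA⟩
    have hCA : (C n : Set X) = A := by rw [hn]; rfl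
    exact ⟨n + 1, hCA ▸ (hstep n).2⟩
  obtain ⟨φ, hφ⟩ := exists_homeomorph_convergesOnClopens
    (hgB.exists_convergesOnClopens fun A hA ↦ (hdec A hA).imp fun n hn ↦ hn.1)
    (hgB.symm.exists_convergesOnClopens fun A hA ↦ (hdec A hA).imp fun n hn ↦ hn.2)
  refine ⟨φ, fun μ hμ ↦ hφ.preserves fun n ↦ hg n μ hμ, fun f hf hpos ↦ ?_⟩
  obtain ⟨n, rfl⟩ : f ∈ Set.range F := hF ▸ ⟨hf, hpos⟩
  obtain ⟨h, hT⟩ := (hstep n).1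
  refine ⟨h, hT.isLocallyConstant, fun x ↦ ?_⟩
  -- All later modifications take place where the transfer function vanishes.
  have hstable (m : ℕ) (hm : n + 1 ≤ m) : h (g m x) = h (g (n + 1) x) :=
    hgB.apply_eq (fun y hy z hz ↦ (hT.eq_zero y hy).trans (hT.eq_zero z hz).symm) hm x
  obtain ⟨m, hmφ, hm⟩ :=
    ((hφ.eventually_apply_eq hT.isLocallyConstant x).and (eventually_ge_atTop (n + 1))).exists
  rw [← hmφ, hstable m hm]
  exact hT.nonneg x

end Limit

/-! ### Realising a dynamical simplex -/

section Separation

variable {X : Type*} [TopologicalSpace X] [MeasurableSpace X]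
  {K : Set (ProbabilityMeasure X)} {ν : ProbabilityMeasure X}

lemma ProbConvex.convex_image [OpensMeasurableSpace X] {ι : Type*} (hK : ProbConvex K)
    (A : ι → Set X) : Convex ℝ ((fun (μ : ProbabilityMeasure X) i ↦ (μ (A i) : ℝ)) '' K) := by
  rintro _ ⟨μ, hμ, rfl⟩ _ ⟨ν, hν, rfl⟩ a b ha hb hab
  lift a to NNReal using ha
  lift b to NNReal using hb
  obtain ⟨ρ, hρ, hρeq⟩ := hK ⟨μ, hμ, rfl⟩ ⟨ν, hν, rfl⟩ (zero_le : 0 ≤ a) (zero_le : 0 ≤ b)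
    (by exact_mod_cast hab)
  refine ⟨ρ, hρ, funext fun i ↦ ?_⟩
  have hρi : ρ (A i) = a * μ (A i) + b * ν (A i) := by
    simpa using congrArg (fun m : FiniteMeasure X ↦ m (A i)) hρeq
  simp [hρi]

lemma integral_sum_indicator_single {X ι : Type*} [MeasurableSpace X] [Fintype ι] [DecidableEq ι]
    {A : ι → Set X} (hA : ∀ i, MeasurableSet (A i)) (l : (ι → ℝ) →ₗ[ℝ] ℝ)
    (μ : ProbabilityMeasure X) :
    ∫ x, ∑ i, (A i).indicator (fun _ ↦ l (Pi.single i 1)) x ∂(μ : Measure X) =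
      l fun i ↦ μ (A i) := by
  rw [integral_finsetSum _ fun i _ ↦ (integrable_const _).indicator (hA i),
    LinearMap.pi_apply_eq_sum_univ]
  refine Finset.sum_congr rfl fun i _ ↦ ?_
  rw [integral_indicator_const _ (hA i)]
  congr 2
  funext j
  simp [Pi.single_apply, eq_comm]

variable [CompactSpace X] [TopologicalSpace.MetrizableSpace X] [TotallyDisconnectedSpace X]
  [BorelSpace X]

lemma exists_isClopen_apply_ne {μ : ProbabilityMeasure X} (h : μ ≠ ν) :
    ∃ A, IsClopen A ∧ μ A ≠ ν A := by
  by_contra! heq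
  have hmeas : (μ : Measure X) = ν := measure_ext_of_isClopen fun A hA ↦ by
    rw [← ProbabilityMeasure.ennreal_coeFn_eq_coeFn_toMeasure, heq A hA,
      ProbabilityMeasure.ennreal_coeFn_eq_coeFn_toMeasure]
  exact h (Subtype.ext hmeas)

lemma exists_real_separating (hKc : IsCompact K) (hK : ProbConvex K) (hν : ν ∉ K) :
    ∃ φ : X → ℝ, IsLocallyConstant φ ∧ (∃ ε > 0, ∀ μ ∈ K, ε ≤ ∫ x, φ x ∂(μ : Measure X)) ∧
      ∫ x, φ x ∂(ν : Measure X) < 0 := by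
  classical
  obtain ⟨t, ht⟩ := hKc.elim_finite_subcover
    (fun A : TopologicalSpace.Clopens X ↦ {μ : ProbabilityMeasure X | (μ A : ℝ) ≠ ν A})
    (fun A ↦ isOpen_ne_fun (continuous_apply_isClopen A.isClopen) continuous_const)
    fun μ hμ ↦ by
      obtain ⟨A, hA, hne⟩ := exists_isClopen_apply_ne (ne_of_mem_of_not_mem hμ hν)
      exact Set.mem_iUnion.2 ⟨⟨A, hA⟩, NNReal.coe_injective.ne hne⟩
  let Φ (μ : ProbabilityMeasure X) (A : t) : ℝ := μ A
  have hΦ : Continuous Φ := continuous_pi fun A ↦ continuous_apply_isClopen A.1.isClopen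
  have hνΦ : Φ ν ∉ Φ '' K := by
    rintro ⟨μ, hμ, heq⟩
    obtain ⟨A, hA, hne⟩ := Set.mem_iUnion₂.1 (ht hμ)
    exact hne (congrFun heq ⟨A, hA⟩)
  obtain ⟨l, u, v, hlu, huv, hvl⟩ := geometric_hahn_banach_compact_closed
    (convex_singleton (Φ ν)) isCompact_singleton (hK.convex_image _) (hKc.image hΦ).isClosed
    (Set.disjoint_singleton_left.2 hνΦ)
  have hsum : IsLocallyConstant fun x ↦
      ∑ A : t, (A : Set X).indicator (fun _ ↦ l (Pi.single A 1)) x :=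
    isLocallyConstant_sum (fun A ↦ isLocallyConstant_indicator A.1.isClopen (.const _)) _
  have hintegral (μ : ProbabilityMeasure X) :
      ∫ x, (∑ A : t, (A : Set X).indicator (fun _ ↦ l (Pi.single A 1)) x - u) ∂(μ : Measure X) =
        l (Φ μ) - u := by
    have hlΦ := integral_sum_indicator_single (fun A : t ↦ A.1.isClopen.isOpen.measurableSet)
      l.toLinearMap μ
    rw [integral_sub (integrable_of_isLocallyConstant hsum) (integrable_const u),
      integral_const, probReal_univ, one_smul]
    exact congrArg (· - u) hlΦ
  refine ⟨_, hsum.comp (· - u), ⟨v - u, sub_pos.2 huv, fun μ hμ ↦ ?_⟩, ?_⟩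
  · exact (sub_le_sub_right (hvl _ ⟨μ, hμ, rfl⟩).le u).trans_eq (hintegral μ).symm
  · exact (hintegral ν).trans_lt (sub_neg.2 (hlu _ rfl))

lemma exists_int_separating (hKc : IsCompact K) (hK : ProbConvex K) (hν : ν ∉ K) :
    ∃ f : X → ℤ, IsLocallyConstant f ∧ (∀ μ ∈ K, 0 < intIntegral μ f) ∧ intIntegral ν f < 0 := by
  obtain ⟨φ, hφ, ⟨ε, hε, hεφ⟩, hνφ⟩ := exists_real_separating hKc hK hν
  obtain ⟨N, hN⟩ := exists_nat_gt (1 / ε)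
  have hN₀ : (0 : ℝ) < N := (one_div_pos.2 hε).trans hN
  have hf : IsLocallyConstant fun x ↦ ⌊N * φ x⌋ := hφ.comp fun y ↦ ⌊N * y⌋
  have hintegral (μ : ProbabilityMeasure X) : Integrable φ (μ : Measure X) :=
    integrable_of_isLocallyConstant hφ
  refine ⟨_, hf, fun μ hμ ↦ ?_, ?_⟩
  · calc 0 < N * ε - 1 := sub_pos.2 ((div_lt_iff₀ hε).1 hN)
      _ ≤ N * ∫ x, φ x ∂(μ : Measure X) - 1 := by gcongr; exact hεφ μ hμ
      _ = ∫ x, (N * φ x - 1) ∂(μ : Measure X) := by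
        rw [integral_sub ((hintegral μ).const_mul _) (integrable_const _), integral_const_mul]
        simp
      _ ≤ intIntegral μ fun x ↦ ⌊N * φ x⌋ :=
        integral_mono (((hintegral μ).const_mul _).sub (integrable_const _)) (integrable_intCast hf)
          fun x ↦ (Int.sub_one_lt_floor _).le
  · calc intIntegral ν (fun x ↦ ⌊N * φ x⌋) ≤ ∫ x, N * φ x ∂(ν : Measure X) :=
        integral_mono (integrable_intCast hf) ((hintegral ν).const_mul _) fun x ↦ Int.floor_le _
      _ = N * ∫ x, φ x ∂(ν : Measure X) := integral_const_mul _ _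
      _ < 0 := mul_neg_of_pos_of_neg hN₀ hνφ

end Separation

section Realisation

variable {X : Type*} [TopologicalSpace X]

lemma zpow_apply_natCast (g : X ≃ₜ X) (k : ℕ) (x : X) : (g.toEquiv ^ (k : ℤ)) x = g^[k] x := by
  rw [zpow_natCast, ← Equiv.Perm.iterate_eq_pow]
  rfl

lemma isMinimal_of_orbitsMeet [CompactSpace X] [T2Space X] [TotallyDisconnectedSpace X]
    {g : X ≃ₜ X} (h : ∀ U, IsClopen U → U.Nonempty → OrbitsMeet g U) : IsMinimal g := by
  intro x
  rw [dense_iff_inter_open]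
  rintro U hU ⟨y, hy⟩
  obtain ⟨V, hV, hyV, hVU⟩ := compact_exists_isClopen_in_isOpen hU hy
  obtain ⟨k, hk⟩ := h V hV ⟨y, hyV⟩ x
  exact ⟨g^[k] x, hVU hk, k, zpow_apply_natCast g k x⟩

variable [CompactSpace X] [MeasurableSpace X] [BorelSpace X] {ν : ProbabilityMeasure X}

lemma Preserves.intIntegral_nonneg {g : X ≃ₜ X} (hg : Preserves g ν) {f h : X → ℤ}
    (hf : IsLocallyConstant f) (hh : IsLocallyConstant h)
    (hnonneg : ∀ x, 0 ≤ f x + h (g x) - h x) : 0 ≤ intIntegral ν f := by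
  have hhg : IsLocallyConstant (h ∘ g) := hh.comp_continuous g.continuous
  calc 0 ≤ intIntegral ν (f + h ∘ g - h) :=
        integral_nonneg fun x ↦ Int.cast_nonneg (hnonneg x)
    _ = intIntegral ν f := by
      rw [intIntegral_sub (isLocallyConstant_add hf hhg) hh, intIntegral_add hf hhg,
        hg.intIntegral_comp, add_sub_cancel_right]

theorem DynamicalSimplex.exists_isMinimal [TopologicalSpace.MetrizableSpace X]
    [TotallyDisconnectedSpace X] [Nonempty X] {K : Set (ProbabilityMeasure X)}
    (hK : DynamicalSimplex K) :
    ∃ g : X ≃ₜ X, IsMinimal g ∧ {μ : ProbabilityMeasure X | Preserves g μ} = K := by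
  obtain ⟨g, hg, hcob⟩ := hK.exists_forall_nonneg
  refine ⟨g, isMinimal_of_orbitsMeet fun U hU hne ↦ ?_, Set.Subset.antisymm (fun ν hν ↦ ?_) hg⟩
  · obtain ⟨N, hN⟩ := hK.exists_intIntegral_indicator_sub_one_pos hU hne
    obtain ⟨h, hh, hnonneg⟩ := hcob _
      (isLocallyConstant_sub (isLocallyConstant_indicator hU (.const N)) (.const 1)) hN
    exact orbitsMeet_of_neg hh hnonneg fun x hx ↦ by simp [hx]
  · by_contra hνK
    obtain ⟨f, hf, hpos, hneg⟩ := exists_int_separating hK.isCompact hK.probConvex hνK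
    obtain ⟨h, hh, hnonneg⟩ := hcob f hf hpos
    exact (Preserves.intIntegral_nonneg hν hf hh hnonneg).not_gt hneg

end Realisation

/-! ### Invariant measures of a minimal homeomorphism -/

/-- The set of `g`-invariant Borel probability measures. -/
def invMeasures {X : Type*} [TopologicalSpace X] [MeasurableSpace X] (g : X ≃ₜ X) :
    Set (ProbabilityMeasure X) :=
  {μ | Preserves g μ}

lemma continuous_zpow {X : Type*} [TopologicalSpace X] (g : X ≃ₜ X) (n : ℤ) :
    Continuous ⇑(g.toEquiv ^ n) := by
  have h : g.toEquiv ^ n = (g ^ n).toEquiv :=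
    (map_zpow (MonoidHom.mk' (Homeomorph.toEquiv (X := X)) fun _ _ ↦ rfl) g n).symm
  rw [h]
  exact (g ^ n).continuous

section InvMeasures

variable {X : Type*} [TopologicalSpace X] [MeasurableSpace X] [BorelSpace X]

lemma probConvex_invMeasures (g : X ≃ₜ X) : ProbConvex (invMeasures g) := by
  rintro _ ⟨μ, hμ, rfl⟩ _ ⟨ν, hν, rfl⟩ a b - - hab
  let ρ : Measure X := a • (μ : Measure X) + b • (ν : Measure X)
  have hρ : IsProbabilityMeasure ρ := ⟨by
    simp only [ρ, Measure.add_apply, Measure.smul_apply, measure_univ, ENNReal.smul_def,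
      smul_eq_mul, mul_one]
    exact_mod_cast hab⟩
  refine ⟨⟨ρ, hρ⟩, ?_, rfl⟩
  change ρ.map g = ρ
  rw [Measure.map_add _ _ g.continuous.measurable, Measure.map_smul, Measure.map_smul,
    show (μ : Measure X).map g = μ from hμ, show (ν : Measure X).map g = ν from hν]

lemma isClosed_invMeasures [HasOuterApproxClosed X] (g : X ≃ₜ X) : IsClosed (invMeasures g) := by
  have h : invMeasures g = {μ | μ.map g.continuous.measurable.aemeasurable = μ} :=
    Set.ext fun μ ↦ (Subtype.ext_iff (a1 := μ.map g.continuous.measurable.aemeasurable)).symm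
  rw [h]
  exact isClosed_eq (ProbabilityMeasure.continuous_map g.continuous) continuous_id

lemma isCompact_invMeasures [CompactSpace X] [TopologicalSpace.MetrizableSpace X] (g : X ≃ₜ X) :
    IsCompact (invMeasures g) :=
  (isClosed_invMeasures g).isCompact

end InvMeasures

namespace IsMinimal

variable {X : Type*} [TopologicalSpace X] [CompactSpace X] {g : X ≃ₜ X} (hg : IsMinimal g)
include hg

lemma orbitsMeet {U : Set X} (hU : IsOpen U) (hne : U.Nonempty) : OrbitsMeet g U := fun x ↦ by
  obtain ⟨t, ht⟩ := isCompact_univ.elim_finite_subcover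
    (fun n : ℤ ↦ ⇑(g.toEquiv ^ n) ⁻¹' U) (fun n ↦ hU.preimage (continuous_zpow g n))
    fun y _ ↦ by
      obtain ⟨_, hyU, n, rfl⟩ := (hg y).inter_open_nonempty U hU hne
      exact Set.mem_iUnion.2 ⟨n, hyU⟩
  -- Finitely many integer times suffice; starting from `g^N x` makes all of them nonnegative.
  let N : ℕ := ∑ n ∈ t, n.natAbs
  obtain ⟨n, hn, hnU⟩ := Set.mem_iUnion₂.1 (ht (Set.mem_univ ((g.toEquiv ^ (N : ℤ)) x)))
  have hnN : n.natAbs ≤ N :=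
    Finset.single_le_sum (f := Int.natAbs) (fun _ _ ↦ Nat.zero_le _) hn
  lift n + N to ℕ using (by lia) with k hk
  exact ⟨k, by rwa [← zpow_apply_natCast, hk, zpow_add]⟩

lemma infinite_range_iterate [T1Space X] [PerfectSpace X] (x : X) :
    (Set.range fun k : ℕ ↦ g^[k] x).Infinite := by
  intro hfin
  obtain ⟨y, hy⟩ : (Set.range fun k : ℕ ↦ g^[k] x)ᶜ.Nonempty := by
    rw [Set.nonempty_compl]
    intro huniv
    exact infinite_of_mem_nhds x univ_mem (huniv ▸ hfin)
  obtain ⟨k, hk⟩ := hg.orbitsMeet hfin.isClosed.isOpen_compl ⟨y, hy⟩ x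
  exact hk ⟨k, rfl⟩

variable [MeasurableSpace X] [BorelSpace X] {μ : ProbabilityMeasure X}

lemma fullSupport (hμ : Preserves g μ) : FullSupport μ := by
  intro U hU hne
  by_contra! hnull
  have hiterate (k : ℕ) : (μ : Measure X) (g^[k] ⁻¹' U) = 0 := by
    rw [((preserves_iff.1 hμ).iterate k).measure_preimage hU.measurableSet.nullMeasurableSet,
      ← ProbabilityMeasure.ennreal_coeFn_eq_coeFn_toMeasure, le_zero_iff.1 hnull,
      ENNReal.coe_zero]
  have hcover : ⋃ k : ℕ, g^[k] ⁻¹' U = Set.univ :=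
    Set.eq_univ_of_forall fun x ↦ Set.mem_iUnion.2 (hg.orbitsMeet hU hne x)
  simpa [hcover] using measure_iUnion_null hiterate

lemma atomless [T1Space X] [PerfectSpace X] (hμ : Preserves g μ) : Atomless μ := by
  intro x
  by_contra hx
  have hatom : (μ : Measure X) {x} ≠ 0 := by
    rwa [← ProbabilityMeasure.ennreal_coeFn_eq_coeFn_toMeasure, ENNReal.coe_ne_zero]
  refine measure_ne_top _ _ ((hg.infinite_range_iterate x).meas_eq_top (μ := (μ : Measure X))
    ⟨_, hatom, ?_⟩)
  rintro _ ⟨k, rfl⟩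
  have hpre : g^[k] ⁻¹' {g^[k] x} = {x} := by
    ext y
    exact (g.injective.iterate k).eq_iff
  rw [← hpre, ((preserves_iff.1 hμ).iterate k).measure_preimage
    (measurableSet_singleton _).nullMeasurableSet]

end IsMinimal

section Empirical

variable {X : Type*} [MeasurableSpace X]

/-- The uniform distribution on the first `n + 1` points of the orbit of `x`. -/
noncomputable def empirical (g : X → X) (x : X) (n : ℕ) : ProbabilityMeasure X :=
  ⟨((n + 1 : ℕ) : ENNReal)⁻¹ • ∑ k ∈ Finset.range (n + 1), Measure.dirac (g^[k] x), ⟨by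
    simpa using ENNReal.inv_mul_cancel (a := (n : ENNReal) + 1) (by simp) (by finiteness)⟩⟩

variable [TopologicalSpace X] [OpensMeasurableSpace X] [CompactSpace X]

lemma integral_empirical (g : X → X) (x : X) (n : ℕ) {φ : X → ℝ} (hφ : Continuous φ) :
    ∫ y, φ y ∂(empirical g x n : Measure X) = birkhoffAverage ℝ g φ (n + 1) x := by
  change ∫ y, φ y ∂(_ • ∑ k ∈ _, Measure.dirac (g^[k] x)) = _
  rw [integral_smul_measure, integral_finsetSum_measure fun k _ ↦
    hφ.integrable_of_hasCompactSupport (HasCompactSupport.of_compactSpace _)]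
  simp only [integral_dirac' _ _ hφ.stronglyMeasurable, birkhoffAverage, birkhoffSum,
    ENNReal.toReal_inv, ENNReal.toReal_natCast]

lemma intIntegral_empirical (g : X → X) (x : X) (n : ℕ) {f : X → ℤ} (hf : IsLocallyConstant f) :
    intIntegral (empirical g x n) f = ((n + 1 : ℕ) : ℝ)⁻¹ * birkhoffSum g f (n + 1) x := by
  rw [intIntegral, integral_empirical g x n (φ := fun y ↦ (f y : ℝ))
    (hf.comp ((↑) : ℤ → ℝ)).continuous]
  simp [birkhoffAverage, birkhoffSum]

end Empirical

lemma birkhoffAverage_comp_self (R : Type*) {X M : Type*} [DivisionSemiring R] [AddCommMonoid M]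
    [Module R M] (g : X → X) (φ : X → M) (n : ℕ) (x : X) :
    birkhoffAverage R g (φ ∘ g) n x = birkhoffAverage R g φ n (g x) := by
  simp only [birkhoffAverage, birkhoffSum, Function.comp_apply, ← Function.iterate_succ_apply,
    Function.iterate_succ_apply']

section Krylov

variable {X : Type*} [TopologicalSpace X] [CompactSpace X] [MeasurableSpace X] [BorelSpace X]
  {μ : ProbabilityMeasure X}

lemma preserves_of_mapClusterPt_empirical [HasOuterApproxClosed X] {g : X ≃ₜ X} {x : ℕ → X}
    (hμ : MapClusterPt μ atTop fun n ↦ empirical g (x n) n) : Preserves g μ := by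
  have := Measure.isProbabilityMeasure_map (μ := (μ : Measure X)) g.continuous.aemeasurable
  refine ext_of_forall_integral_eq_of_IsFiniteMeasure fun φ ↦ ?_
  rw [integral_map g.continuous.aemeasurable φ.continuous.aestronglyMeasurable, ← sub_eq_zero]
  let φg : BoundedContinuousFunction X ℝ := φ.compContinuous g
  let Φ (ρ : ProbabilityMeasure X) : ℝ := ∫ y, φg y ∂(ρ : Measure X) - ∫ y, φ y ∂(ρ : Measure X)
  have hΦ : Continuous Φ :=
    (ProbabilityMeasure.continuous_integral_boundedContinuousFunction φg).sub
      (ProbabilityMeasure.continuous_integral_boundedContinuousFunction φ)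
  have hlim : Tendsto (fun n ↦ Φ (empirical g (x n) n)) atTop (𝓝 0) := by
    obtain ⟨C, hC⟩ := φ.bounded
    refine squeeze_zero_norm (fun n ↦ ?_)
      ((tendsto_const_nhds (x := C)).div_atTop <|
        tendsto_natCast_atTop_atTop.comp (tendsto_add_atTop_nat 1))
    change ‖∫ y, φg y ∂(empirical g (x n) n : Measure X) - _‖ ≤ _
    rw [integral_empirical g _ _ φg.continuous, integral_empirical g _ _ φ.continuous,
      show birkhoffAverage ℝ g φg (n + 1) (x n) = _ from birkhoffAverage_comp_self ℝ g φ _ _,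
      ← dist_eq_norm, dist_birkhoffAverage_apply_birkhoffAverage]
    exact div_le_div_of_nonneg_right (hC _ _) (Nat.cast_nonneg _)
  have hcluster : ClusterPt (Φ μ) (𝓝 0) :=
    (hμ.continuousAt_comp hΦ.continuousAt).clusterPt.mono hlim
  exact eq_of_nhds_neBot hcluster

lemma exists_birkhoffSum_pos [TopologicalSpace.MetrizableSpace X] {g : X ≃ₜ X} {f : X → ℤ}
    (hf : IsLocallyConstant f) (hpos : ∀ μ ∈ invMeasures g, 0 < intIntegral μ f) :
    ∃ N : ℕ, ∀ x, 0 < birkhoffSum g f N x := by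
  by_contra! hcon
  choose x hx using fun n ↦ hcon (n + 1)
  obtain ⟨μ, hμ⟩ := exists_clusterPt_of_compactSpace
    (atTop.map fun n ↦ empirical g (x n) n)
  have hempirical (n : ℕ) : intIntegral (empirical g (x n) n) f ≤ 0 := by
    rw [intIntegral_empirical g _ _ hf]
    exact mul_nonpos_of_nonneg_of_nonpos (by positivity) (Int.cast_nonpos.2 (hx n))
  refine (hpos μ (preserves_of_mapClusterPt_empirical hμ)).not_ge ?_
  exact (isClosed_le (continuous_intIntegral hf) continuous_const).mem_of_mapClusterPt hμ
    (.of_forall hempirical)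

end Krylov

/-! ### Goodness of the invariant measures -/

/-- Greedy matching of the points of `A` with points of `B` in their forward orbits, at distance
`0, 1, 2, …` in turn: the parts of `A` and of `B` which are left unmatched before stage `n`. -/
def unmatched {X : Type*} (g : X → X) (A B : Set X) : ℕ → Set X × Set X
  | 0 => (A, B)
  | n + 1 =>
    ((unmatched g A B n).1 \ g^[n] ⁻¹' (unmatched g A B n).2,
      (unmatched g A B n).2 \ g^[n] '' (unmatched g A B n).1)

section Unmatched

variable {X : Type*} {g : X → X} {A B : Set X} {x : X} {k m m' n N : ℕ}

lemma antitone_unmatched : Antitone (unmatched g A B) :=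
  antitone_nat_of_succ_le fun _ ↦ ⟨Set.sdiff_subset, Set.sdiff_subset⟩

lemma eq_of_mem_unmatched_sdiff
    (hm : x ∈ (unmatched g A B m).1 \ (unmatched g A B (m + 1)).1)
    (hm' : x ∈ (unmatched g A B m').1 \ (unmatched g A B (m' + 1)).1) : m = m' := by
  have le_of_mem {i j : ℕ} (hi : x ∈ (unmatched g A B i).1)
      (hj : x ∉ (unmatched g A B (j + 1)).1) : i ≤ j :=
    not_lt.1 fun hlt ↦ hj ((antitone_unmatched hlt).1 hi)
  exact (le_of_mem hm.1 hm'.2).antisymm (le_of_mem hm'.1 hm.2)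

lemma exists_mem_unmatched_sdiff (hg : Function.Injective g) (hx : x ∈ (unmatched g A B N).1)
    (hk : k < N) (hkB : g^[k] x ∈ B) :
    ∃ m ≤ k, g^[k - m] x ∈ (unmatched g A B m).1 \ (unmatched g A B (m + 1)).1 := by
  have hkk : g^[k] x ∉ (unmatched g A B k).2 := ((antitone_unmatched hk).1 hx).2
  obtain ⟨m, hmk, hmem, hnot⟩ : ∃ m < k, g^[k] x ∈ (unmatched g A B m).2 ∧
      g^[k] x ∉ (unmatched g A B (m + 1)).2 := by
    by_contra! hcon
    have hall (m : ℕ) (hm : m ≤ k) : g^[k] x ∈ (unmatched g A B m).2 := by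
      induction m with
      | zero => exact hkB
      | succ m ih => exact hcon m hm (ih (Nat.le_of_succ_le hm))
    exact hkk (hall k le_rfl)
  have hsplit : g^[m] (g^[k - m] x) = g^[k] x := by
    rw [← Function.iterate_add_apply, Nat.add_sub_cancel' hmk.le]
  obtain ⟨y, hy, hyx⟩ : g^[k] x ∈ g^[m] '' (unmatched g A B m).1 :=
    not_not.1 fun h ↦ hnot ⟨hmem, h⟩
  obtain rfl : y = g^[k - m] x := hg.iterate m (hyx.trans hsplit.symm)
  exact ⟨m, hmk.le, hy, fun h ↦ h.2 (by rwa [Set.mem_preimage, hsplit])⟩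

lemma birkhoffSum_indicator_le_of_mem_unmatched (hg : Function.Injective g)
    (hx : x ∈ (unmatched g A B N).1) :
    birkhoffSum g (B.indicator (1 : X → ℤ)) N x ≤ birkhoffSum g (A.indicator 1) N x := by
  classical
  choose! m hm hmem using fun k ↦ exists_mem_unmatched_sdiff (k := k) hg hx
  have hcard : {k ∈ Finset.range N | g^[k] x ∈ B}.card ≤
      {k ∈ Finset.range N | g^[k] x ∈ A}.card := by
    refine Finset.card_le_card_of_injOn (fun k ↦ k - m k) (fun k hk ↦ ?_) fun k hk k' hk' hkk' ↦ ?_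
    · simp only [Finset.coe_filter, Finset.mem_range, Set.mem_ofPred_eq] at hk ⊢
      exact ⟨(Nat.sub_le _ _).trans_lt hk.1,
        (antitone_unmatched (Nat.zero_le _)).1 (hmem k hk.1 hk.2).1⟩
    · simp only [Finset.coe_filter, Finset.mem_range, Set.mem_ofPred_eq] at hk hk' hkk'
      have hmm' : m k = m k' := eq_of_mem_unmatched_sdiff (hmem k hk.1 hk.2)
        (hkk' ▸ hmem k' hk'.1 hk'.2)
      rw [← Nat.sub_add_cancel (hm k hk.1 hk.2), hkk', hmm', Nat.sub_add_cancel (hm k' hk'.1 hk'.2)]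
  simpa [birkhoffSum, Set.indicator_apply] using hcard

end Unmatched

section Good

variable {X : Type*} [TopologicalSpace X] {g : X ≃ₜ X} {A B : Set X}

lemma isClopen_image_iterate (g : X ≃ₜ X) (hA : IsClopen A) (n : ℕ) : IsClopen (g^[n] '' A) := by
  rw [Set.image_eq_preimage_of_inverse (Function.LeftInverse.iterate g.symm_apply_apply n)
    (Function.LeftInverse.iterate g.apply_symm_apply n)]
  exact hA.preimage (g.symm.continuous.iterate n)

lemma isClopen_unmatched (g : X ≃ₜ X) (hA : IsClopen A) (hB : IsClopen B) (n : ℕ) :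
    IsClopen (unmatched g A B n).1 ∧ IsClopen (unmatched g A B n).2 := by
  induction n with
  | zero => exact ⟨hA, hB⟩
  | succ n ih =>
    exact ⟨ih.1.diff (ih.2.preimage (g.continuous.iterate n)),
      ih.2.diff (isClopen_image_iterate g ih.1 n)⟩

variable [MeasurableSpace X] [BorelSpace X] {μ : ProbabilityMeasure X}

lemma Preserves.coe_unmatched_sub (hg : Preserves g μ) (hA : IsClopen A) (hB : IsClopen B)
    (n : ℕ) : (μ (unmatched g A B n).1 : ℝ) - μ (unmatched g A B n).2 = μ A - μ B := by
  induction n with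
  | zero => rfl
  | succ n ih =>
    obtain ⟨ha, hb⟩ := isClopen_unmatched g hA hB n
    rw [unmatched]
    set a := (unmatched g A B n).1
    set b := (unmatched g A B n).2
    have himage := isClopen_image_iterate g ha n
    have hmatched : μ (a ∩ g^[n] ⁻¹' b) = μ (b ∩ g^[n] '' a) := by
      rw [← hg.measure_preimage_iterate (hb.inter himage).isOpen.measurableSet n,
        Set.preimage_inter, (g.injective.iterate n).preimage_image, Set.inter_comm]
    have hsplit_a := coe_inter_add_sdiff μ a
      (hb.preimage (g.continuous.iterate n)).isOpen.measurableSet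
    have hsplit_b := coe_inter_add_sdiff μ b himage.isOpen.measurableSet
    rw [hmatched] at hsplit_a
    linarith

variable [CompactSpace X] [TopologicalSpace.MetrizableSpace X]

theorem good_invMeasures (g : X ≃ₜ X) : Good (invMeasures g) := by
  intro A B hA hB hAB
  have hAlc : IsLocallyConstant (A.indicator (1 : X → ℤ)) :=
    isLocallyConstant_indicator hA (.const 1)
  have hBlc : IsLocallyConstant (B.indicator (1 : X → ℤ)) :=
    isLocallyConstant_indicator hB (.const 1)
  obtain ⟨N, hN⟩ := exists_birkhoffSum_pos (isLocallyConstant_sub hBlc hAlc) fun μ hμ ↦ by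
    rw [intIntegral_sub hBlc hAlc, intIntegral_indicator_one μ hA.isOpen.measurableSet,
      intIntegral_indicator_one μ hB.isOpen.measurableSet, sub_pos]
    exact_mod_cast hAB μ hμ
  have hempty : (unmatched g A B N).1 = ∅ := Set.eq_empty_of_forall_notMem fun x hx ↦ by
    have hpos := hN x
    rw [birkhoffSum_sub, sub_pos] at hpos
    exact (birkhoffSum_indicator_le_of_mem_unmatched g.injective hx).not_gt hpos
  have hNcl := (isClopen_unmatched g hA hB N).2
  refine ⟨B \ (unmatched g A B N).2, hB.diff hNcl, Set.sdiff_subset, fun μ hμ ↦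
    NNReal.coe_injective ?_⟩
  have hsub : (unmatched g A B N).2 ⊆ B := (antitone_unmatched (g := g) (A := A) N.zero_le).2
  have hμN := Preserves.coe_unmatched_sub hμ hA hB N
  rw [hempty, ProbabilityMeasure.coeFn_empty, NNReal.coe_zero] at hμN
  rw [coe_sdiff μ hsub hNcl.isOpen.measurableSet]
  linarith

end Good

/-! ### Approximate divisibility of the invariant measures -/

lemma abs_mul_sub_sum_le {n : ℕ} [NeZero n] {a : ZMod n → ℝ} {d : ℝ}
    (h : ∀ i, |a (i + 1) - a i| ≤ d) : |n * a 0 - ∑ i, a i| ≤ n * ((n - 1) * d) := by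
  have hnat (k : ℕ) : |a k - a 0| ≤ k * d := by
    induction k with
    | zero => simp
    | succ k ih =>
      push_cast
      linarith [abs_sub_le (a (k + 1)) (a k) (a 0), h k]
  have hle (i : ZMod n) : |a i - a 0| ≤ (n - 1) * d := by
    have hval : (i.val : ℝ) + 1 ≤ n := mod_cast ZMod.val_lt i
    have hi := hnat i.val
    rw [ZMod.natCast_zmod_val] at hi
    exact hi.trans <| mul_le_mul_of_nonneg_right (by linarith) ((abs_nonneg _).trans (h 0))
  calc |n * a 0 - ∑ i, a i| = |∑ i, (a i - a 0)| := by simp [abs_sub_comm]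
    _ ≤ ∑ i, |a i - a 0| := Finset.abs_sum_le_sum_abs _ _
    _ ≤ ∑ _i : ZMod n, ((n : ℝ) - 1) * d := Finset.sum_le_sum fun i _ ↦ hle i
    _ = n * ((n - 1) * d) := by simp

section

variable {X : Type*} [MeasurableSpace X] {μ : ProbabilityMeasure X} {A B D : Set X}

lemma abs_coe_sdiff_sub_coe_sdiff_le (hAB : μ A = μ B) (hD : MeasurableSet D) :
    |(μ (A \ D) : ℝ) - μ (B \ D)| ≤ μ D := by
  have hA := coe_inter_add_sdiff μ A hD
  have hB := coe_inter_add_sdiff μ B hD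
  rw [hAB] at hA
  have hdiff : (μ (A \ D) : ℝ) - μ (B \ D) = μ (B ∩ D) - μ (A ∩ D) := by linarith
  rw [hdiff]
  exact abs_sub_le_of_nonneg_of_le (NNReal.coe_nonneg _) (coe_mono μ Set.inter_subset_right)
    (NNReal.coe_nonneg _) (coe_mono μ Set.inter_subset_right)

end

/-- The points of `A \ D` whose number of visits to `A` before the first visit to `D` is congruent
to `i` modulo `n`. -/
def visitClass {X : Type*} (g : X → X) (A D : Set X) {n : ℕ} (i : ZMod n) : Set X :=
  A \ D ∩ entrySum g D (A.indicator 1) ⁻¹' {i}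

section VisitClass

variable {X : Type*} [TopologicalSpace X] {g : X ≃ₜ X} {A D : Set X} {n : ℕ}

lemma OrbitsMeet.isLocallyConstant_visits (h : OrbitsMeet g D) (hA : IsClopen A)
    (hD : IsClopen D) : IsLocallyConstant (entrySum g D (A.indicator (1 : X → ZMod n))) :=
  h.isLocallyConstant_entrySum g.continuous hD (isLocallyConstant_indicator hA (.const 1))

lemma OrbitsMeet.isClopen_visitClass (h : OrbitsMeet g D) (hA : IsClopen A) (hD : IsClopen D)
    (i : ZMod n) : IsClopen (visitClass g A D i) :=
  (hA.diff hD).inter (isClopen_preimage (h.isLocallyConstant_visits hA hD) _)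

variable [MeasurableSpace X] [BorelSpace X] {μ : ProbabilityMeasure X}

lemma OrbitsMeet.sum_visitClass (h : OrbitsMeet g D) (hA : IsClopen A) (hD : IsClopen D)
    [NeZero n] : ∑ i : ZMod n, (μ (visitClass g A D i) : ℝ) = μ (A \ D) := by
  have hl := h.isLocallyConstant_visits (n := n) hA hD
  have hmeas (i : ZMod n) :
      MeasurableSet (entrySum g D (A.indicator (1 : X → ZMod n)) ⁻¹' {i}) :=
    (isClopen_preimage hl {i}).isOpen.measurableSet
  have hsum := sum_measureReal_preimage_singleton (μ := (μ : Measure X).restrict (A \ D))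
    (f := entrySum g D (A.indicator (1 : X → ZMod n))) Finset.univ fun i _ ↦ hmeas i
  simpa [visitClass, measureReal_restrict_apply, hmeas, Set.inter_comm (A \ D)] using hsum

/-- Moving one step along the orbit loses one visit for the points of `A \ D` and none for the
points outside `A ∪ D`. -/
lemma Preserves.abs_visitClass_succ_sub_le (hg : Preserves g μ) (h : OrbitsMeet g D)
    (hA : IsClopen A) (hD : IsClopen D) (i : ZMod n) :
    |(μ (visitClass g A D (i + 1)) : ℝ) - μ (visitClass g A D i)| ≤ μ D := by
  set l : X → ZMod n := entrySum g D (A.indicator 1) with hl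
  have hF : IsClopen (l ⁻¹' {i}) := isClopen_preimage (h.isLocallyConstant_visits hA hD) _
  have hstep {x : X} (hx : x ∉ D) : l x = A.indicator 1 x + l (g x) := h.entrySum_of_notMem _ hx
  have hin : (g ⁻¹' (l ⁻¹' {i}) \ D) ∩ A = visitClass g A D (i + 1) := by
    ext x
    have hx (hxA : x ∈ A) (hxD : x ∉ D) : l x = i + 1 ↔ l (g x) = i := by
      rw [hstep hxD, Set.indicator_of_mem hxA, Pi.one_apply, add_comm, add_left_inj]
    simp only [visitClass, ← hl, Set.mem_inter_iff, Set.mem_sdiff, Set.mem_preimage,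
      Set.mem_singleton_iff]
    tauto
  have hin' : (l ⁻¹' {i} \ D) ∩ A = visitClass g A D i := by
    rw [visitClass, ← hl, Set.inter_comm, ← Set.inter_sdiff_assoc, Set.inter_sdiff_right_comm]
  have hout : (g ⁻¹' (l ⁻¹' {i}) \ D) \ A = (l ⁻¹' {i} \ D) \ A := by
    ext x
    have hx (hxA : x ∉ A) (hxD : x ∉ D) : l x = l (g x) := by
      rw [hstep hxD, Set.indicator_of_notMem hxA, zero_add]
    simp only [Set.mem_sdiff, Set.mem_preimage, Set.mem_singleton_iff]
    grind
  have hsplit := coe_inter_add_sdiff μ (g ⁻¹' (l ⁻¹' {i}) \ D) hA.isOpen.measurableSet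
  have hsplit' := coe_inter_add_sdiff μ (l ⁻¹' {i} \ D) hA.isOpen.measurableSet
  rw [hin, hout] at hsplit
  rw [hin'] at hsplit'
  have hle := abs_coe_sdiff_sub_coe_sdiff_le
    (hg.measure_preimage hF.isOpen.measurableSet) hD.isOpen.measurableSet
  rwa [← hsplit, ← hsplit', add_sub_add_right_eq_sub] at hle

lemma OrbitsMeet.exists_isClopen_abs_mul_sub_le (h : OrbitsMeet g D) (hA : IsClopen A)
    (hD : IsClopen D) (hn : 1 ≤ n) :
    ∃ E, IsClopen E ∧ E ⊆ A ∧ ∀ μ ∈ invMeasures g, |n * (μ E : ℝ) - μ A| ≤ n ^ 2 * μ D := by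
  have : NeZero n := ⟨Nat.one_le_iff_ne_zero.1 hn⟩
  refine ⟨visitClass g A D (0 : ZMod n), h.isClopen_visitClass hA hD 0, fun x hx ↦ hx.1.1,
    fun μ hμ ↦ ?_⟩
  have hclass := abs_mul_sub_sum_le (n := n) (a := fun i ↦ μ (visitClass g A D i))
    (Preserves.abs_visitClass_succ_sub_le hμ h hA hD)
  rw [h.sum_visitClass hA hD] at hclass
  have hsplit := coe_inter_add_sdiff μ A hD.isOpen.measurableSet
  have hrest : |(μ (A \ D) : ℝ) - μ A| ≤ μ D := by
    rw [abs_sub_comm, ← hsplit, add_sub_cancel_right, NNReal.abs_eq]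
    exact coe_mono μ Set.inter_subset_right
  have hn' : (1 : ℝ) ≤ n := mod_cast hn
  nlinarith [abs_sub_le (n * (μ (visitClass g A D (0 : ZMod n)) : ℝ)) (μ (A \ D)) (μ A),
    mul_nonneg (sub_nonneg.2 hn') (NNReal.coe_nonneg (μ D))]

end VisitClass

namespace IsMinimal

variable {X : Type*} [TopologicalSpace X] [CompactSpace X] [TopologicalSpace.MetrizableSpace X]
  [MeasurableSpace X] [BorelSpace X] {g : X ≃ₜ X} (hg : IsMinimal g)
include hg

lemma exists_pos_forall_le_invMeasures {A : Set X} (hA : IsClopen A) (hne : A.Nonempty) :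
    ∃ δ > 0, ∀ μ ∈ invMeasures g, δ ≤ (μ A : ℝ) :=
  exists_pos_forall_le (isCompact_invMeasures g) (continuous_apply_isClopen hA) fun _ hμ ↦
    mod_cast hg.fullSupport hμ A hA.isOpen hne

variable [TotallyDisconnectedSpace X] [PerfectSpace X]

lemma exists_isClopen_mem_forall_lt (x : X) {ε : ℝ} (hε : 0 < ε) :
    ∃ A, IsClopen A ∧ x ∈ A ∧ ∀ μ ∈ invMeasures g, (μ A : ℝ) < ε := by
  obtain ⟨A, hA, hxA, -, hlt⟩ := exists_isClopen_forall_lt (isCompact_invMeasures g)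
    (fun μ hμ ↦ hg.atomless hμ) isOpen_univ (Set.mem_univ x) hε
  exact ⟨A, hA, hxA, hlt⟩

lemma exists_isClopen_abs_mul_sub_le {A : Set X} (hA : IsClopen A) {n : ℕ} (hn : 1 ≤ n) {ε : ℝ}
    (hε : 0 < ε) :
    ∃ E, IsClopen E ∧ E ⊆ A ∧ ∀ μ ∈ invMeasures g, |n * (μ E : ℝ) - μ A| ≤ ε := by
  rcases isEmpty_or_nonempty X with _ | ⟨⟨x⟩⟩
  · exact ⟨A, hA, le_rfl, by simp [Set.eq_empty_of_isEmpty A, hε.le]⟩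
  obtain ⟨D, hD, hxD, hDlt⟩ :=
    hg.exists_isClopen_mem_forall_lt x (ε := ε / n ^ 2) (by positivity)
  obtain ⟨E, hE, hEA, hle⟩ :=
    (hg.orbitsMeet hD.isOpen ⟨x, hxD⟩).exists_isClopen_abs_mul_sub_le hA hD hn
  refine ⟨E, hE, hEA, fun μ hμ ↦ (hle μ hμ).trans ?_⟩
  rw [mul_comm, ← le_div_iff₀ (by positivity)]
  exact (hDlt μ hμ).le

/-- Removing from an almost exact `n`-th part of `A` a copy of a small set `Y`, whose measures
exceed the error, makes the error one-sided. -/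
theorem approximatelyDivisible_invMeasures : ApproximatelyDivisible (invMeasures g) := by
  intro A hA n hn ε hε
  have hn₀ : (0 : ℝ) < n := mod_cast hn
  rcases A.eq_empty_or_nonempty with rfl | ⟨x, hx⟩
  · exact ⟨∅, isClopen_empty, le_rfl, fun μ _ ↦ by simp [hε.le]⟩
  obtain ⟨δ, hδ, hδA⟩ := hg.exists_pos_forall_le_invMeasures hA ⟨x, hx⟩
  obtain ⟨Y, hY, hxY, hYlt⟩ :=
    hg.exists_isClopen_mem_forall_lt x (ε := min δ ε / (2 * n)) (by positivity)
  obtain ⟨η, hη, hηY⟩ := hg.exists_pos_forall_le_invMeasures hY ⟨x, hxY⟩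
  obtain ⟨E, hE, hEA, hle⟩ :=
    hg.exists_isClopen_abs_mul_sub_le hA hn (ε := n * η / 2) (by positivity)
  have hest {μ : ProbabilityMeasure X} (hμ : μ ∈ invMeasures g) :
      |n * (μ E : ℝ) - μ A| ≤ n * μ Y / 2 ∧ n * (μ Y : ℝ) < min δ ε / 2 := by
    have hYμ := hYlt μ hμ
    rw [lt_div_iff₀ (by positivity)] at hYμ
    exact ⟨(hle μ hμ).trans (by gcongr; exact hηY μ hμ), by linarith⟩
  have hYpos {μ : ProbabilityMeasure X} (hμ : μ ∈ invMeasures g) : 0 < n * (μ Y : ℝ) :=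
    mul_pos hn₀ (hη.trans_le (hηY μ hμ))
  obtain ⟨Z, hZ, hZE, hZY⟩ := good_invMeasures g Y E hY hE fun μ hμ ↦ by
    have hlt : (n : ℝ) * μ Y < n * μ E := by
      linarith [(abs_le.1 (hest hμ).1).1, (hest hμ).2, min_le_left δ ε, hδA μ hμ, hYpos hμ]
    exact_mod_cast lt_of_mul_lt_mul_left hlt hn₀.le
  refine ⟨E \ Z, hE.diff hZ, Set.sdiff_subset.trans hEA, fun μ hμ ↦ ?_⟩
  rw [coe_sdiff μ hZE hZ.isOpen.measurableSet, hZY μ hμ]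
  have hle := abs_le.1 (hest hμ).1
  constructor <;> linarith [(hest hμ).2, min_le_right δ ε, hYpos hμ]

theorem dynamicalSimplex_invMeasures (hne : (invMeasures g).Nonempty) :
    DynamicalSimplex (invMeasures g) :=
  ⟨hne, isCompact_invMeasures g, probConvex_invMeasures g,
    fun _ hμ ↦ ⟨hg.atomless hμ, hg.fullSupport hμ⟩, good_invMeasures g,
    hg.approximatelyDivisible_invMeasures⟩

end IsMinimal

end DynSimplex

theorem exists_minimal_homeomorph_iff_dynamicalSimplex
    {X : Type*} [TopologicalSpace X] [CompactSpace X]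
    [TopologicalSpace.MetrizableSpace X] [TotallyDisconnectedSpace X] [PerfectSpace X]
    [Nonempty X] [MeasurableSpace X] [BorelSpace X]
    (K : Set (MeasureTheory.ProbabilityMeasure X)) (hK : K.Nonempty) :
    (∃ g : X ≃ₜ X, DynSimplex.IsMinimal g ∧
        {μ : MeasureTheory.ProbabilityMeasure X | DynSimplex.Preserves g μ} = K) ↔
      DynSimplex.DynamicalSimplex K := by
  constructor
  · rintro ⟨g, hg, rfl⟩
    exact hg.dynamicalSimplex_invMeasures hK
  · exact fun h ↦ h.exists_isMinimal
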